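/- arXiv:1607.01342 — 3 statements merged into one kernel-verified Lean document; each statement's English description precedes it below -/
import Mathlib

section
/- Let W ∈ ℂ[x₁,…,xₙ] be nondegenerate and quasihomogeneous with weights (q₁,…,qₙ), 0 < qᵢ < 1. Then: (1) the class of Hess(W) in Q_W is nonzero and is homogeneous of weighted degree Σᵢ(1 − 2qᵢ); (2) the homogeneous component of Q_W of weighted degree Σᵢ(1 − 2qᵢ) is one-dimensional, spanned by [Hess(W)]; and (3) every homogeneous component of Q_W of weighted degree strictly greater than Σᵢ(1 − 2qᵢ) is zero. -/
open MvPolynomial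
open scoped TensorProduct

noncomputable section

namespace LG

variable {σ : Type*} [Fintype σ] [DecidableEq σ]

/-- The Jacobian ideal of a polynomial `W`, generated by its partial derivatives. -/
def jacobianIdeal (W : MvPolynomial σ ℂ) : Ideal (MvPolynomial σ ℂ) :=
  Ideal.span (Set.range fun i => pderiv i W)

/-- The Milnor ring (local algebra) `Q_W = ℂ[x]/(∂W/∂x₁,…,∂W/∂xₙ)`. -/
abbrev MilnorRing (W : MvPolynomial σ ℂ) :=
  MvPolynomial σ ℂ ⧸ jacobianIdeal W

/-- The canonical projection onto the Milnor ring. -/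
def mkQ (W : MvPolynomial σ ℂ) : MvPolynomial σ ℂ →ₐ[ℂ] MilnorRing W :=
  Ideal.Quotient.mkₐ ℂ (jacobianIdeal W)

/-- `W` is quasihomogeneous with (positive rational) weights `q`:
every monomial `x^a` occurring in `W` satisfies `∑ i, a i * q i = 1`. -/
def IsQuasiHomogeneous (W : MvPolynomial σ ℂ) (q : σ → ℚ) : Prop :=
  (∀ i, 0 < q i) ∧ ∀ a ∈ W.support, ∑ i, (a i : ℚ) * q i = 1

/-- `W` is nondegenerate: the origin is the only common zero of its partial
derivatives. -/
def Nondegenerate (W : MvPolynomial σ ℂ) : Prop :=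
  ∀ x : σ → ℂ, (∀ i, eval x (pderiv i W) = 0) → x = 0

/-- `W` is admissible with weights `q`: nondegenerate, quasihomogeneous with
uniquely determined weights, and without cross-term monomials `xᵢxⱼ` (`i ≠ j`). -/
def Admissible (W : MvPolynomial σ ℂ) (q : σ → ℚ) : Prop :=
  Nondegenerate W ∧ IsQuasiHomogeneous W q ∧
    (∀ q', IsQuasiHomogeneous W q' → q' = q) ∧
    ∀ a ∈ W.support, ∀ i j, i ≠ j → a ≠ Finsupp.single i 1 + Finsupp.single j 1

/-- The Hessian of `W`: the determinant of the matrix of second partial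
derivatives. -/
def hess (W : MvPolynomial σ ℂ) : MvPolynomial σ ℂ :=
  Matrix.det (Matrix.of fun i j => pderiv i (pderiv j W))

/-- The homogeneous component of the Milnor ring of weighted degree `d`:
the image in `Q_W` of the span of the monomials of weighted degree `d`. -/
def gradedPiece (W : MvPolynomial σ ℂ) (q : σ → ℚ) (d : ℚ) :
    Submodule ℂ (MilnorRing W) :=
  (weightedHomogeneousSubmodule ℂ q d).map (mkQ W).toLinearMap

/-- The top weighted degree `∑ᵢ (1 - 2qᵢ)` of the Milnor ring. -/
def topDegree (q : σ → ℚ) : ℚ := ∑ i, (1 - 2 * q i)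

/-- The part of the Milnor ring of weighted degree below the top degree. -/
def belowTop (W : MvPolynomial σ ℂ) (q : σ → ℚ) : Submodule ℂ (MilnorRing W) :=
  ⨆ (d : ℚ) (_ : d < topDegree q), gradedPiece W q d

/-- `p` is the pairing of the Milnor ring of `W`: the top weighted-degree
homogeneous component of `a * b` equals `(p a b / μ) • [Hess W]`, i.e.
`a * b - (p a b / μ) • [Hess W]` lies in the part of degree `< topDegree q`. -/
def IsMilnorPairing (W : MvPolynomial σ ℂ) (q : σ → ℚ)
    (p : MilnorRing W → MilnorRing W → ℂ) : Prop :=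
  ∀ a b : MilnorRing W,
    a * b - (p a b / (Module.finrank ℂ (MilnorRing W) : ℂ)) • mkQ W (hess W)
      ∈ belowTop W q

/-- The rescaling substitution `xᵢ ↦ ζᵢ · xᵢ`. -/
def scaleVars (ζ : σ → ℂ) : MvPolynomial σ ℂ →ₐ[ℂ] MvPolynomial σ ℂ :=
  aeval fun i => C (ζ i) * X i

/-- `φ : Q_W → Q_V` is equivariant for the diagonal symmetry `ζ`, expressed on
representatives: the action of `ζ` sends the class of `p` to
`det ζ • [p ∘ ζ]`, and `φ` intertwines the two actions. -/
def EquivariantAt (W V : MvPolynomial σ ℂ)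
    (φ : MilnorRing W → MilnorRing V) (ζ : σ → ℂ) : Prop :=
  ∀ p r : MvPolynomial σ ℂ, φ (mkQ W p) = mkQ V r →
    φ ((∏ i, ζ i) • mkQ W (scaleVars ζ p)) = (∏ i, ζ i) • mkQ V (scaleVars ζ r)

/-- `φ : Q_W → Q_V` preserves the weighted grading. -/
def PreservesGrading {σ τ : Type*} [Fintype σ] [DecidableEq σ]
    [Fintype τ] [DecidableEq τ]
    {W : MvPolynomial σ ℂ} {V : MvPolynomial τ ℂ}
    (φ : MilnorRing W → MilnorRing V) (qW : σ → ℚ) (qV : τ → ℚ) : Prop :=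
  ∀ d : ℚ, ∀ a ∈ gradedPiece W qW d, φ a ∈ gradedPiece V qV d

/-- `φ : Q_W → Q_V` preserves the pairings: `⟨a,b⟩_{Q_W} = ⟨φ a, φ b⟩_{Q_V}`. -/
def PreservesPairings {σ τ : Type*} [Fintype σ] [DecidableEq σ]
    [Fintype τ] [DecidableEq τ]
    {W : MvPolynomial σ ℂ} {V : MvPolynomial τ ℂ}
    (φ : MilnorRing W → MilnorRing V) (qW : σ → ℚ) (qV : τ → ℚ) : Prop :=
  ∀ pW pV, IsMilnorPairing W qW pW → IsMilnorPairing V qV pV →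
    ∀ a b, pW a b = pV (φ a) (φ b)

end LG

open LG

/-!
Let `f` be as many polynomials as there are variables, generating an ideal `I` that contains the
powers `xᵢ^(N+1)`. Write `A f = (xᵢ^(N+1))` and `B x = f` for polynomial matrices `A` and `B`.

The determinant of a matrix taking one vector to a regular sequence is unique modulo that sequence.
Over `ℂ[x]/I` this applies at the generic zero `y` of `f`: expanding `f = B' (x - y)`, the product
`det A * det B'` agrees modulo the `xᵢ^(N+1)` with the Cauchy kernel
`∏ᵢ (xᵢ^(N+1) - yᵢ^(N+1)) / (xᵢ - yᵢ)`, and the coefficient of `∏ᵢ xᵢ^N` in `r` times the kernel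
is `r(y)`, the class of `r` modulo `I`. Hence multiplication by `det A` embeds `ℂ[x]/I` into
`ℂ[x]/(xᵢ^(N+1))`, whose socle is spanned by `∏ᵢ xᵢ^N`; and `det A * det B` has coefficient `1`
there, so `det B` spans the socle of `ℂ[x]/I`.

For `f = ∂W`, nondegeneracy puts powers of the variables in `I` by the Nullstellensatz, and Euler's
identity provides a `B` whose determinant is a multiple of the Hessian. Since the weights are
positive, multiplying a nonzero homogeneous class by suitable variables raises its degree until it
lands in the socle, so no degree exceeds that of the Hessian.
-/

open Matrix

section Determinants

variable {n R : Type*} [Fintype n] [DecidableEq n] [CommRing R]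

theorem det_mul_mem_of_mulVec_mem {I : Ideal R} {M : Matrix n n R} {v : n → R}
    (h : ∀ i, (M *ᵥ v) i ∈ I) (k : n) : M.det * v k ∈ I := by
  have cramer : M.adjugate *ᵥ (M *ᵥ v) = M.det • v := by
    rw [mulVec_mulVec, adjugate_mul, smul_mulVec, one_mulVec]
  rw [← smul_eq_mul, ← Pi.smul_apply, ← cramer]
  exact Ideal.sum_mem _ fun i _ => I.mul_mem_left _ (h i)

theorem mul_det_mem_of_mem_span_range {I : Ideal R} {M : Matrix n n R} {v : n → R}
    (h : ∀ i, (M *ᵥ v) i ∈ I) {r : R} (hr : r ∈ Ideal.span (Set.range v)) : r * M.det ∈ I := by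
  obtain ⟨c, rfl⟩ := Ideal.mem_span_range_iff_exists_fun.1 hr
  rw [Finset.sum_mul]
  refine Ideal.sum_mem _ fun k _ => ?_
  rw [mul_assoc, mul_comm (v k)]
  exact I.mul_mem_left _ (det_mul_mem_of_mulVec_mem h k)

theorem det_sub_det_updateRow_mem_span {M : Matrix n n R} {u g a : n → R} {k : n}
    (hreg : ∀ r, r * u k ∈ Ideal.span (g '' {k}ᶜ) → r ∈ Ideal.span (g '' {k}ᶜ))
    (hM : M *ᵥ u = g) (ha : a ⬝ᵥ u = g k) :
    M.det - (M.updateRow k a).det ∈ Ideal.span (g '' {k}ᶜ) := by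
  have det_sub : M.det - (M.updateRow k a).det = (M.updateRow k (M k - a)).det := by
    rw [sub_eq_iff_eq_add, ← det_updateRow_add, sub_add_cancel, updateRow_eq_self]
  have dot_eq_zero : (M k - a) ⬝ᵥ u = 0 := by
    rw [sub_dotProduct, ha, sub_eq_zero]
    exact congrFun hM k
  rw [det_sub]
  refine hreg _ (det_mul_mem_of_mulVec_mem (fun i => ?_) k)
  rw [updateRow_mulVec, dot_eq_zero, hM]
  obtain rfl | hik := eq_or_ne i k
  · simp
  · rw [Function.update_of_ne hik]
    exact Ideal.subset_span ⟨i, hik, rfl⟩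

theorem det_sub_det_mem_span_of_mulVec_eq {M M' : Matrix n n R} {u g : n → R}
    (hreg : ∀ k r, r * u k ∈ Ideal.span (g '' {k}ᶜ) → r ∈ Ideal.span (g '' {k}ᶜ))
    (hM : M *ᵥ u = g) (hM' : M' *ᵥ u = g) :
    M.det - M'.det ∈ Ideal.span (Set.range g) := by
  suffices ∀ (s : Finset n) (P : Matrix n n R), P *ᵥ u = g → (∀ i ∉ s, P i = M' i) →
      P.det - M'.det ∈ Ideal.span (Set.range g) from
    this Finset.univ M hM (by simp)
  intro s
  induction s using Finset.induction_on with
  | empty =>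
    intro P _ hPM'
    have hP : P = M' := funext fun i => hPM' i (Finset.notMem_empty i)
    simp [hP]
  | insert k s _ ih =>
    intro P hP hPM'
    have dot_eq : M' k ⬝ᵥ u = g k := congrFun hM' k
    have row_mem : P.det - (P.updateRow k (M' k)).det ∈ Ideal.span (Set.range g) :=
      Ideal.span_mono (Set.image_subset_range _ _)
        (det_sub_det_updateRow_mem_span (hreg k) hP dot_eq)
    have rest_mem : (P.updateRow k (M' k)).det - M'.det ∈ Ideal.span (Set.range g) := by
      refine ih _ (by rw [updateRow_mulVec, hP, dot_eq, Function.update_eq_self]) fun i his => ?_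
      obtain rfl | hik := eq_or_ne i k
      · exact updateRow_self
      · rw [updateRow_ne hik, hPM' i (by simp [hik, his])]
    simpa using add_mem row_mem rest_mem

end Determinants

section MonomialIdeals

variable {σ R : Type*}

theorem mem_span_X_pow_image_iff [CommSemiring R] {N : ℕ} {s : Set σ} {p : MvPolynomial σ R} :
    p ∈ Ideal.span ((fun i => X i ^ N) '' s) ↔ ∀ m ∈ p.support, ∃ i ∈ s, N ≤ m i := by
  have image_eq : (fun i => X i ^ N : σ → MvPolynomial σ R) '' s =
      (fun m => monomial m 1) '' ((fun i => Finsupp.single i N) '' s) := by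
    simp [Set.image_image, X_pow_eq_monomial]
  simp [image_eq, mem_ideal_span_monomial_image, Finsupp.single_le_iff]

theorem mem_span_X_pow_image_of_mul_X_pow_mem [CommSemiring R] {N e : ℕ} {s : Set σ} {k : σ}
    (hk : k ∉ s) {p : MvPolynomial σ R}
    (h : p * X k ^ e ∈ Ideal.span ((fun i => X i ^ N) '' s)) :
    p ∈ Ideal.span ((fun i => X i ^ N) '' s) := by
  rw [mem_span_X_pow_image_iff] at h ⊢
  intro m hm
  obtain ⟨i, his, hi⟩ := h (m + Finsupp.single k e) (by
    rwa [X_pow_eq_monomial, mem_support_iff, coeff_mul_monomial, mul_one, ← mem_support_iff])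
  have hik : i ≠ k := fun h => hk (h ▸ his)
  exact ⟨i, his, by simpa [hik] using hi⟩

theorem mem_span_X_pow_image_of_mul_X_sub_C_mem [CommRing R] {N : ℕ} {s : Set σ} {k : σ}
    (hk : k ∉ s) {a : R} (ha : IsNilpotent a) {p : MvPolynomial σ R}
    (h : p * (X k - C a) ∈ Ideal.span ((fun i => X i ^ N) '' s)) :
    p ∈ Ideal.span ((fun i => X i ^ N) '' s) := by
  obtain ⟨e, he⟩ := ha
  have dvd : X k - C a ∣ (X k ^ e : MvPolynomial σ R) := by
    simpa [← C_pow, he] using sub_dvd_pow_sub_pow (X k : MvPolynomial σ R) (C a) e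
  exact mem_span_X_pow_image_of_mul_X_pow_mem hk (Ideal.mem_of_dvd _ (mul_dvd_mul_left p dvd) h)

variable (σ R) in
/-- The ideal generated by the `N`-th powers of the variables. -/
def varPowIdeal [CommSemiring R] (N : ℕ) : Ideal (MvPolynomial σ R) :=
  Ideal.span (Set.range fun i => X i ^ N)

theorem X_pow_mem_varPowIdeal [CommSemiring R] (N : ℕ) (i : σ) : X i ^ N ∈ varPowIdeal σ R N :=
  Ideal.subset_span ⟨i, rfl⟩

theorem mem_varPowIdeal_iff [CommSemiring R] {N : ℕ} {p : MvPolynomial σ R} :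
    p ∈ varPowIdeal σ R N ↔ ∀ m ∈ p.support, ∃ i, N ≤ m i := by
  simp [varPowIdeal, ← Set.image_univ, mem_span_X_pow_image_iff]

theorem map_mem_varPowIdeal {S : Type*} [CommSemiring R] [CommSemiring S] (φ : R →+* S) {N : ℕ}
    {p : MvPolynomial σ R} (hp : p ∈ varPowIdeal σ R N) : map φ p ∈ varPowIdeal σ S N :=
  mem_varPowIdeal_iff.2 fun m hm => mem_varPowIdeal_iff.1 hp m (support_map_subset φ p hm)

theorem det_sub_det_mem_varPowIdeal [Fintype σ] [DecidableEq σ] [CommRing R] {N : ℕ} {y : σ → R}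
    (hy : ∀ i, IsNilpotent (y i)) {M M' : Matrix σ σ (MvPolynomial σ R)}
    (hM : (M *ᵥ fun i => X i - C (y i)) = fun i => X i ^ N)
    (hM' : (M' *ᵥ fun i => X i - C (y i)) = fun i => X i ^ N) :
    M.det - M'.det ∈ varPowIdeal σ R N :=
  det_sub_det_mem_span_of_mulVec_eq
    (fun k _ => mem_span_X_pow_image_of_mul_X_sub_C_mem (by simp) (hy k)) hM hM'

end MonomialIdeals

section SocleOfVarPowIdeal

variable {σ R : Type*} [Fintype σ]

variable (σ) in
/-- The exponent of the monomial `∏ i, X i ^ N`, which spans the socle of the quotient by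
`varPowIdeal σ R (N + 1)`. -/
def constExponent (N : ℕ) : σ →₀ ℕ :=
  Finsupp.equivFunOnFinite.symm fun _ => N

@[simp]
theorem constExponent_apply (N : ℕ) (i : σ) : constExponent σ N i = N := rfl

theorem coeff_constExponent_eq_zero_of_mem [CommSemiring R] {N : ℕ} {p : MvPolynomial σ R}
    (hp : p ∈ varPowIdeal σ R (N + 1)) : coeff (constExponent σ N) p = 0 := by
  by_contra hcoeff
  obtain ⟨i, hi⟩ := mem_varPowIdeal_iff.1 hp _ (mem_support_iff.2 hcoeff)
  simp at hi

theorem mem_varPowIdeal_of_coeff_constExponent_eq_zero [CommSemiring R] {N : ℕ}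
    {p : MvPolynomial σ R} (hp : ∀ j, X j * p ∈ varPowIdeal σ R (N + 1))
    (hcoeff : coeff (constExponent σ N) p = 0) : p ∈ varPowIdeal σ R (N + 1) := by
  refine mem_varPowIdeal_iff.2 fun m hm => ?_
  obtain ⟨j, hj⟩ : ∃ j, m j ≠ N := by
    contrapose! hm
    obtain rfl : m = constExponent σ N := Finsupp.ext hm
    simpa using hcoeff
  have shifted_mem : m + Finsupp.single j 1 ∈ (X j * p).support := by
    rwa [mem_support_iff, mul_comm, coeff_mul_X, ← mem_support_iff]
  obtain ⟨i, hi⟩ := mem_varPowIdeal_iff.1 (hp j) _ shifted_mem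
  refine ⟨i, ?_⟩
  obtain rfl | hij := eq_or_ne i j
  · rw [Finsupp.add_apply, Finsupp.single_eq_same] at hi
    omega
  · rwa [Finsupp.add_apply, Finsupp.single_eq_of_ne hij] at hi

end SocleOfVarPowIdeal

section CauchyKernel

variable {σ R : Type*} [CommRing R]

theorem sub_C_eval_mem_span_X_sub_C (y : σ → R) (p : MvPolynomial σ R) :
    p - C (eval y p) ∈ Ideal.span (Set.range fun i => X i - C (y i)) := by
  induction p using MvPolynomial.induction_on with
  | C a => simp
  | add p q hp hq => simpa [add_sub_add_comm] using add_mem hp hq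
  | mul_X p i hp =>
    have hX : X i - C (y i) ∈ Ideal.span (Set.range fun i => X i - C (y i)) :=
      Ideal.subset_span ⟨i, rfl⟩
    have split : p * X i - C (eval y (p * X i)) =
        p * (X i - C (y i)) + (p - C (eval y p)) * C (y i) := by
      rw [eval_mul, eval_X, C_mul]
      ring
    rw [split]
    exact add_mem (Ideal.mul_mem_left _ _ hX) (Ideal.mul_mem_right _ _ hp)

theorem exists_matrix_mulVec_X_sub_C_eq [Fintype σ] {f : σ → MvPolynomial σ R} {y : σ → R}
    (hf : ∀ i, eval y (f i) = 0) :
    ∃ B : Matrix σ σ (MvPolynomial σ R), (B *ᵥ fun i => X i - C (y i)) = f := by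
  have mem (i : σ) : f i ∈ Ideal.span (Set.range fun i => X i - C (y i)) := by
    simpa [hf i] using sub_C_eval_mem_span_X_sub_C y (f i)
  choose B hB using fun i => Ideal.mem_span_range_iff_exists_fun.1 (mem i)
  exact ⟨of B, funext hB⟩

variable [Fintype σ] [DecidableEq σ]

/-- The diagonal matrix with entries `(X i ^ (N + 1) - y i ^ (N + 1)) / (X i - y i)`. Its
determinant is a Cauchy kernel: if `y i ^ (N + 1) = 0`, then multiplying by it and
extracting the coefficient of `∏ i, X i ^ N` is evaluation at `y`. -/
def cauchyMatrix (N : ℕ) (y : σ → R) : Matrix σ σ (MvPolynomial σ R) :=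
  diagonal fun i => ∑ a ∈ Finset.range (N + 1), X i ^ a * C (y i) ^ (N - a)

theorem cauchyMatrix_mulVec {N : ℕ} {y : σ → R} (hy : ∀ i, y i ^ (N + 1) = 0) :
    (cauchyMatrix N y *ᵥ fun i => X i - C (y i)) = fun i => X i ^ (N + 1) := by
  ext1 i
  rw [cauchyMatrix, mulVec_diagonal]
  refine ((Commute.all (X i) (C (y i))).geom_sum₂_mul (N + 1)).trans ?_
  rw [← C_pow, hy, C_0, sub_zero]

theorem coeff_constExponent_det_cauchyMatrix (N : ℕ) (y : σ → R) :
    coeff (constExponent σ N) (cauchyMatrix N y).det = 1 := by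
  have prod_eq (a : σ → ℕ) : ∏ i, X i ^ a i * C (y i) ^ (N - a i) =
      monomial (Finsupp.equivFunOnFinite.symm a) (∏ i, y i ^ (N - a i)) := by
    rw [monomial_eq, Finsupp.prod_fintype _ _ (by simp), Finset.prod_mul_distrib, mul_comm]
    simp
  rw [cauchyMatrix, det_diagonal, Finset.prod_univ_sum, coeff_sum]
  simp_rw [prod_eq, coeff_monomial]
  rw [Finset.sum_eq_single fun _ => N]
  · simp [constExponent]
  · intro a _ ha
    exact if_neg fun h => ha (Finsupp.equivFunOnFinite.symm.injective h)
  · simp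

theorem coeff_mul_det_cauchyMatrix {N : ℕ} {y : σ → R} (hy : ∀ i, y i ^ (N + 1) = 0)
    (p : MvPolynomial σ R) :
    coeff (constExponent σ N) (p * (cauchyMatrix N y).det) = eval y p := by
  have mem : (p - C (eval y p)) * (cauchyMatrix N y).det ∈ varPowIdeal σ R (N + 1) := by
    refine mul_det_mem_of_mem_span_range (fun i => ?_) (sub_C_eval_mem_span_X_sub_C y p)
    rw [cauchyMatrix_mulVec hy]
    exact X_pow_mem_varPowIdeal _ i
  have coeff_eq := coeff_constExponent_eq_zero_of_mem mem
  rwa [sub_mul, coeff_sub, sub_eq_zero, coeff_C_mul, coeff_constExponent_det_cauchyMatrix,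
    mul_one] at coeff_eq

theorem eval_eq_zero_of_mul_det_mem_varPowIdeal {N : ℕ} {y : σ → R} (hy : ∀ i, y i ^ (N + 1) = 0)
    {M : Matrix σ σ (MvPolynomial σ R)}
    (hM : (M *ᵥ fun i => X i - C (y i)) = fun i => X i ^ (N + 1)) {p : MvPolynomial σ R}
    (hp : p * M.det ∈ varPowIdeal σ R (N + 1)) : eval y p = 0 := by
  have det_sub_mem : M.det - (cauchyMatrix N y).det ∈ varPowIdeal σ R (N + 1) :=
    det_sub_det_mem_varPowIdeal (fun i => ⟨N + 1, hy i⟩) hM (cauchyMatrix_mulVec hy)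
  have mul_kernel_mem : p * (cauchyMatrix N y).det ∈ varPowIdeal σ R (N + 1) := by
    simpa [mul_sub] using sub_mem hp (Ideal.mul_mem_left _ p det_sub_mem)
  rw [← coeff_mul_det_cauchyMatrix hy, coeff_constExponent_eq_zero_of_mem mul_kernel_mem]

end CauchyKernel

section CompleteIntersection

variable {σ R : Type*} [CommRing R]

theorem eval_mk_X_map_algebraMap (I : Ideal (MvPolynomial σ R)) (p : MvPolynomial σ R) :
    eval (fun i => Ideal.Quotient.mk I (X i)) (map (algebraMap R (MvPolynomial σ R ⧸ I)) p) =
      Ideal.Quotient.mk I p := by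
  rw [eval_map]
  exact (DFunLike.congr_fun (aeval_unique (Ideal.Quotient.mkₐ R I)) p).symm

variable [Fintype σ] {f : σ → MvPolynomial σ R} {N : ℕ}

theorem exists_matrix_mulVec_eq_X_pow (hpow : ∀ i, X i ^ (N + 1) ∈ Ideal.span (Set.range f)) :
    ∃ A : Matrix σ σ (MvPolynomial σ R), A *ᵥ f = fun i => X i ^ (N + 1) := by
  choose A hA using fun i => Ideal.mem_span_range_iff_exists_fun.1 (hpow i)
  exact ⟨of A, funext hA⟩

variable [DecidableEq σ] {A B : Matrix σ σ (MvPolynomial σ R)}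

-- The idea is to expand `f` at its generic zero, the point `y` of residue classes of the variables.
theorem mem_span_range_of_mul_det_mem_varPowIdeal (hA : A *ᵥ f = fun i => X i ^ (N + 1))
    {r : MvPolynomial σ R} (hr : r * A.det ∈ varPowIdeal σ R (N + 1)) :
    r ∈ Ideal.span (Set.range f) := by
  set I := Ideal.span (Set.range f)
  have f_mem (i : σ) : f i ∈ I := Ideal.subset_span ⟨i, rfl⟩
  let φ : MvPolynomial σ R →+* MvPolynomial σ (MvPolynomial σ R ⧸ I) := map (algebraMap _ _)
  let y : σ → MvPolynomial σ R ⧸ I := fun i => Ideal.Quotient.mk I (X i)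
  have eval_φ (p : MvPolynomial σ R) : eval y (φ p) = Ideal.Quotient.mk I p :=
    eval_mk_X_map_algebraMap I p
  have hy (i : σ) : y i ^ (N + 1) = 0 := by
    rw [← map_pow, Ideal.Quotient.eq_zero_iff_mem, ← congrFun hA i]
    exact Ideal.sum_mem _ fun j _ => I.mul_mem_left _ (f_mem j)
  obtain ⟨B, hB⟩ : ∃ B, (B *ᵥ fun i => X i - C (y i)) = φ ∘ f :=
    exists_matrix_mulVec_X_sub_C_eq fun i => by
      rw [Function.comp_apply, eval_φ, Ideal.Quotient.eq_zero_iff_mem]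
      exact f_mem i
  have hAB : (A.map φ * B) *ᵥ (fun i => X i - C (y i)) = fun i => X i ^ (N + 1) := by
    ext1 i
    rw [← mulVec_mulVec, hB, ← RingHom.map_mulVec, hA, map_pow, map_X]
  have mul_det_mem : φ r * (A.map φ * B).det ∈ varPowIdeal σ _ (N + 1) := by
    rw [det_mul, ← RingHom.mapMatrix_apply, ← RingHom.map_det, ← mul_assoc, ← map_mul]
    exact Ideal.mul_mem_right _ _ (map_mem_varPowIdeal _ hr)
  rw [← Ideal.Quotient.eq_zero_iff_mem, ← eval_φ]
  exact eval_eq_zero_of_mul_det_mem_varPowIdeal hy hAB mul_det_mem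

theorem coeff_constExponent_det_mul_det (hA : A *ᵥ f = fun i => X i ^ (N + 1)) (hB : B *ᵥ X = f) :
    coeff (constExponent σ N) (A.det * B.det) = 1 := by
  have mem : (A * B).det - (cauchyMatrix N (0 : σ → R)).det ∈ varPowIdeal σ R (N + 1) :=
    det_sub_det_mem_varPowIdeal (y := 0) (fun _ => IsNilpotent.zero)
      (by simp [← mulVec_mulVec, hB, hA]) (cauchyMatrix_mulVec (by simp))
  have coeff_eq := coeff_constExponent_eq_zero_of_mem mem
  rwa [coeff_sub, coeff_constExponent_det_cauchyMatrix, sub_eq_zero, det_mul] at coeff_eq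

theorem mul_det_mem_varPowIdeal (hA : A *ᵥ f = fun i => X i ^ (N + 1)) {r : MvPolynomial σ R}
    (hr : r ∈ Ideal.span (Set.range f)) : r * A.det ∈ varPowIdeal σ R (N + 1) :=
  mul_det_mem_of_mem_span_range (fun i => hA ▸ X_pow_mem_varPowIdeal _ i) hr

theorem det_notMem_span_range [Nontrivial R] (hpow : ∀ i, X i ^ (N + 1) ∈ Ideal.span (Set.range f))
    (hB : B *ᵥ X = f) : B.det ∉ Ideal.span (Set.range f) := by
  intro hmem
  obtain ⟨A, hA⟩ := exists_matrix_mulVec_eq_X_pow hpow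
  have coeff_eq := coeff_constExponent_eq_zero_of_mem (mul_det_mem_varPowIdeal hA hmem)
  rw [mul_comm, coeff_constExponent_det_mul_det hA hB] at coeff_eq
  exact one_ne_zero coeff_eq

theorem X_mul_det_mem_span_range (hB : B *ᵥ X = f) (j : σ) :
    X j * B.det ∈ Ideal.span (Set.range f) := by
  rw [mul_comm]
  exact det_mul_mem_of_mulVec_mem (fun i => hB ▸ Ideal.subset_span ⟨i, rfl⟩) j

theorem exists_sub_C_mul_det_mem_span_range
    (hpow : ∀ i, X i ^ (N + 1) ∈ Ideal.span (Set.range f)) (hB : B *ᵥ X = f)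
    {r : MvPolynomial σ R} (hr : ∀ j, X j * r ∈ Ideal.span (Set.range f)) :
    ∃ c : R, r - C c * B.det ∈ Ideal.span (Set.range f) := by
  obtain ⟨A, hA⟩ := exists_matrix_mulVec_eq_X_pow hpow
  set c := coeff (constExponent σ N) (r * A.det) with hc
  refine ⟨c, mem_span_range_of_mul_det_mem_varPowIdeal hA ?_⟩
  refine mem_varPowIdeal_of_coeff_constExponent_eq_zero (fun j => ?_) ?_
  · rw [← mul_assoc, mul_sub, mul_left_comm]
    exact mul_det_mem_varPowIdeal hA
      (sub_mem (hr j) (Ideal.mul_mem_left _ _ (X_mul_det_mem_span_range hB j)))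
  · rw [sub_mul, coeff_sub, mul_assoc, coeff_C_mul, mul_comm B.det,
      coeff_constExponent_det_mul_det hA hB, mul_one, ← hc, sub_self]

end CompleteIntersection

section Jacobian

variable {σ R : Type*} [Fintype σ]

-- `IsWeightedHomogeneous.sum_weight_X_mul_pderiv` is the case `S = ℕ`.
theorem sum_weight_smul_X_mul_pderiv {S : Type*} [CommSemiring S] [CommSemiring R] [Algebra S R]
    {w : σ → S} {d : S} {p : MvPolynomial σ R} (hp : IsWeightedHomogeneous w p d) :
    ∑ j, w j • (X j * pderiv j p) = d • p := by
  induction hp using IsWeightedHomogeneous.induction_on with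
  | zero => simp
  | add p q _ _ hp hq => simp [mul_add, Finset.sum_add_distrib, hp, hq]
  | monomial m r hm =>
    rw [Finsupp.weight_apply, Finsupp.sum_fintype _ _ (by simp)] at hm
    simp_rw [X_mul_pderiv_monomial, ← hm, Finset.sum_smul]
    exact Finset.sum_congr rfl fun j _ => by rw [smul_comm, smul_assoc]

variable [DecidableEq σ]

/-- The Jacobian determinant of a system of polynomials `f`. The matrix is transposed, with
rows indexed by the variables, so that `hess W` is by definition the case `f j = ∂W/∂xⱼ`. -/
def jacobianDet [CommRing R] (f : σ → MvPolynomial σ R) : MvPolynomial σ R :=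
  (of fun i j => pderiv i (f j)).det

theorem isWeightedHomogeneous_jacobianDet {M : Type*} [AddCommGroup M] [CommRing R]
    {f : σ → MvPolynomial σ R} {w d : σ → M} (hf : ∀ i, IsWeightedHomogeneous w (f i) (d i)) :
    IsWeightedHomogeneous w (jacobianDet f) (∑ i, (d i - w i)) := by
  rw [jacobianDet, det_apply]
  refine IsWeightedHomogeneous.sum _ _ _ fun τ _ => ?_
  have degree_eq : ∑ i, (d i - w i) = ∑ i, (d i - w (τ i)) := by
    rw [Finset.sum_sub_distrib, Finset.sum_sub_distrib, Equiv.sum_comp τ w]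
  have prod_homogeneous : IsWeightedHomogeneous w (∏ i, pderiv (τ i) (f i)) (∑ i, (d i - w i)) :=
    degree_eq ▸ IsWeightedHomogeneous.prod _ _ _ fun i _ => (hf i).pderiv (sub_add_cancel _ _)
  obtain sign_eq | sign_eq := Int.units_eq_one_or (Equiv.Perm.sign τ) <;> rw [sign_eq]
  · simpa using prod_homogeneous
  · simpa using prod_homogeneous.neg

end Jacobian

section WeightedHomogeneous

variable {σ R : Type*}

attribute [local instance] weightedGradedAlgebra in
theorem weightedHomogeneousComponent_mem_span_range {ι M : Type*} [AddCommMonoid M]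
    [CommSemiring R] {f : ι → MvPolynomial σ R} {w : σ → M} {d : ι → M}
    (hf : ∀ i, IsWeightedHomogeneous w (f i) (d i)) {p : MvPolynomial σ R}
    (hp : p ∈ Ideal.span (Set.range f)) (e : M) :
    weightedHomogeneousComponent w e p ∈ Ideal.span (Set.range f) := by
  classical
  refine weightedHomogeneousComponent_mem_of_mem R w (Ideal.homogeneous_span _ _ ?_) hp e
  rintro _ ⟨i, rfl⟩
  exact ⟨d i, hf i⟩

theorem exists_X_pow_mem_of_idealOfVars_le_radical [Finite σ] [CommSemiring R]
    {I : Ideal (MvPolynomial σ R)} (hrad : idealOfVars σ R ≤ I.radical) :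
    ∃ N, ∀ i, X i ^ (N + 1) ∈ I := by
  obtain ⟨N, hN⟩ := Ideal.exists_pow_le_of_le_radical_of_fg hrad (idealOfVars_fg σ R)
  refine ⟨N, fun i => hN (Ideal.pow_le_pow_right N.le_succ (Ideal.pow_mem_pow ?_ _))⟩
  exact Ideal.subset_span ⟨i, rfl⟩

variable {K : Type*} [Fintype σ] [Field K] [CharZero K] {f : σ → MvPolynomial σ K} {w d : σ → ℚ}

theorem exists_matrix_mulVec_X_eq_and_det_eq [DecidableEq σ]
    (hf : ∀ i, IsWeightedHomogeneous w (f i) (d i)) (hd : ∀ i, d i ≠ 0) :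
    ∃ (B : Matrix σ σ (MvPolynomial σ K)) (c : K), B *ᵥ X = f ∧ B.det = C c * jacobianDet f := by
  let weightedJacobian : Matrix σ σ (MvPolynomial σ K) :=
    of fun i j => C (w j : K) * (of fun i j => pderiv j (f i)) i j
  refine ⟨of fun i j => C (d i : K)⁻¹ * weightedJacobian i j,
    (∏ i, (d i : K)⁻¹) * ∏ j, (w j : K), funext fun i => ?_, ?_⟩
  · have euler : ∑ j, C (w j : K) * pderiv j (f i) * X j = C (d i : K) * f i := by
      simpa [Algebra.smul_def, algebraMap_eq, mul_assoc, mul_comm (X _)]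
        using sum_weight_smul_X_mul_pderiv (hf i)
    calc ∑ j, C (d i : K)⁻¹ * (C (w j : K) * pderiv j (f i)) * X j
        = C (d i : K)⁻¹ * (C (d i : K) * f i) := by simp_rw [← euler, Finset.mul_sum, mul_assoc]
      _ = f i := by
        rw [← mul_assoc, ← C_mul, inv_mul_cancel₀ (Rat.cast_ne_zero.2 (hd i)), C_1, one_mul]
  · rw [det_mul_column, det_mul_row, ← det_transpose (of _), C_mul, map_prod, map_prod, mul_assoc]
    rfl

theorem jacobianDet_notMem_span_range [DecidableEq σ]
    (hf : ∀ i, IsWeightedHomogeneous w (f i) (d i)) (hd : ∀ i, d i ≠ 0)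
    (hrad : idealOfVars σ K ≤ (Ideal.span (Set.range f)).radical) :
    jacobianDet f ∉ Ideal.span (Set.range f) := by
  obtain ⟨N, hN⟩ := exists_X_pow_mem_of_idealOfVars_le_radical hrad
  obtain ⟨B, c, hB, det_eq⟩ := exists_matrix_mulVec_X_eq_and_det_eq hf hd
  exact fun hmem => det_notMem_span_range hN hB (det_eq ▸ Ideal.mul_mem_left _ _ hmem)

theorem exists_sub_C_mul_jacobianDet_mem_span_range [DecidableEq σ]
    (hf : ∀ i, IsWeightedHomogeneous w (f i) (d i)) (hd : ∀ i, d i ≠ 0)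
    (hrad : idealOfVars σ K ≤ (Ideal.span (Set.range f)).radical) {p : MvPolynomial σ K}
    (hp : ∀ j, X j * p ∈ Ideal.span (Set.range f)) :
    ∃ c : K, p - C c * jacobianDet f ∈ Ideal.span (Set.range f) := by
  obtain ⟨N, hN⟩ := exists_X_pow_mem_of_idealOfVars_le_radical hrad
  obtain ⟨B, b, hB, det_eq⟩ := exists_matrix_mulVec_X_eq_and_det_eq hf hd
  obtain ⟨c, hc⟩ := exists_sub_C_mul_det_mem_span_range hN hB hp
  exact ⟨c * b, by rwa [C_mul, mul_assoc, ← det_eq]⟩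

theorem mem_span_range_of_lt_degree (hf : ∀ i, IsWeightedHomogeneous w (f i) (d i))
    (hw : ∀ i, 0 < w i) (hd : ∀ i, d i ≠ 0)
    (hrad : idealOfVars σ K ≤ (Ideal.span (Set.range f)).radical) {p : MvPolynomial σ K} {e : ℚ}
    (hp : IsWeightedHomogeneous w p e) (he : ∑ i, (d i - w i) < e) :
    p ∈ Ideal.span (Set.range f) := by
  classical
  obtain ⟨N, hN⟩ := Ideal.exists_pow_le_of_le_radical_of_fg hrad (idealOfVars_fg σ K)
  suffices ∀ (k : ℕ) (p : MvPolynomial σ K) (e : ℚ), IsWeightedHomogeneous w p e →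
      ∑ i, (d i - w i) < e → (∀ r ∈ idealOfVars σ K ^ k, r * p ∈ Ideal.span (Set.range f)) →
      p ∈ Ideal.span (Set.range f) from
    this N p e hp he fun r hr => Ideal.mul_mem_right _ _ (hN hr)
  intro k
  induction k with
  | zero => exact fun p _ _ _ h => by simpa using h 1 (by simp)
  | succ k ih =>
    intro p e hp he h
    have socle_mem (j : σ) : X j * p ∈ Ideal.span (Set.range f) := by
      refine ih _ _ ((isWeightedHomogeneous_X K w j).mul hp) (by linarith [hw j]) fun r hr => ?_
      rw [← mul_assoc]
      exact h _ (pow_succ (idealOfVars σ K) k ▸ Ideal.mul_mem_mul hr (Ideal.subset_span ⟨j, rfl⟩))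
    obtain ⟨c, hc⟩ := exists_sub_C_mul_jacobianDet_mem_span_range hf hd hrad socle_mem
    have component_mem := weightedHomogeneousComponent_mem_span_range hf hc e
    rwa [map_sub, hp.weightedHomogeneousComponent_same, weightedHomogeneousComponent_C_mul,
      (isWeightedHomogeneous_jacobianDet hf).weightedHomogeneousComponent_ne e he.ne',
      mul_zero, sub_zero] at component_mem

theorem exists_sub_C_mul_jacobianDet_mem_of_isWeightedHomogeneous [DecidableEq σ]
    (hf : ∀ i, IsWeightedHomogeneous w (f i) (d i)) (hw : ∀ i, 0 < w i) (hd : ∀ i, d i ≠ 0)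
    (hrad : idealOfVars σ K ≤ (Ideal.span (Set.range f)).radical) {p : MvPolynomial σ K}
    (hp : IsWeightedHomogeneous w p (∑ i, (d i - w i))) :
    ∃ c : K, p - C c * jacobianDet f ∈ Ideal.span (Set.range f) :=
  exists_sub_C_mul_jacobianDet_mem_span_range hf hd hrad fun j =>
    mem_span_range_of_lt_degree hf hw hd hrad ((isWeightedHomogeneous_X K w j).mul hp)
      (lt_add_of_pos_left _ (hw j))

end WeightedHomogeneous

section Milnor

theorem idealOfVars_le_radical_of_zeroLocus_subset {σ k : Type*} [Finite σ] [Field k]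
    [IsAlgClosed k] {I : Ideal (MvPolynomial σ k)} (h : zeroLocus k I ⊆ {0}) :
    idealOfVars σ k ≤ I.radical := by
  rw [← vanishingIdeal_zeroLocus_eq_radical (K := k), idealOfVars, Ideal.span_le]
  rintro _ ⟨i, rfl⟩ x hx
  simp [Set.mem_singleton_iff.1 (h hx)]

variable {σ : Type*} {W : MvPolynomial σ ℂ} {q : σ → ℚ}

theorem idealOfVars_le_radical_jacobianIdeal [Finite σ] (hnd : Nondegenerate W) :
    idealOfVars σ ℂ ≤ (jacobianIdeal W).radical := by
  refine idealOfVars_le_radical_of_zeroLocus_subset fun x hx => hnd x fun i => ?_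
  rw [← aeval_eq_eval]
  exact hx _ (Ideal.subset_span ⟨i, rfl⟩)

theorem mkQ_eq_zero_iff {p : MvPolynomial σ ℂ} : mkQ W p = 0 ↔ p ∈ jacobianIdeal W :=
  Ideal.Quotient.eq_zero_iff_mem

theorem smul_mkQ_eq_iff {c : ℂ} {p r : MvPolynomial σ ℂ} :
    c • mkQ W r = mkQ W p ↔ p - C c * r ∈ jacobianIdeal W := by
  rw [eq_comm, ← sub_eq_zero, ← map_smul, ← map_sub, mkQ_eq_zero_iff, smul_eq_C_mul]

variable [Fintype σ]

theorem isWeightedHomogeneous_of_isQuasiHomogeneous (hqh : IsQuasiHomogeneous W q) :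
    IsWeightedHomogeneous q W 1 := by
  intro a ha
  rw [← hqh.2 a (mem_support_iff.2 ha), Finsupp.weight_apply, Finsupp.sum_fintype _ _ (by simp)]
  simp only [nsmul_eq_mul]

theorem topDegree_eq_sum (q : σ → ℚ) : topDegree q = ∑ i, (1 - q i - q i) :=
  Finset.sum_congr rfl fun i _ => by ring

end Milnor

theorem hessian_spans_top_degree_general {σ : Type*} [Fintype σ] [DecidableEq σ]
    (W : MvPolynomial σ ℂ) (q : σ → ℚ) (hq : ∀ i, q i ≠ 1)
    (hnd : Nondegenerate W) (hqh : IsQuasiHomogeneous W q) :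
    (mkQ W (hess W) ≠ 0 ∧ mkQ W (hess W) ∈ gradedPiece W q (topDegree q)) ∧
    gradedPiece W q (topDegree q) = Submodule.span ℂ {mkQ W (hess W)} ∧
    (∀ d : ℚ, topDegree q < d → gradedPiece W q d = ⊥) := by
  have pderiv_homogeneous (i : σ) : IsWeightedHomogeneous q (pderiv i W) (1 - q i) :=
    (isWeightedHomogeneous_of_isQuasiHomogeneous hqh).pderiv (sub_add_cancel _ _)
  have degree_ne_zero (i : σ) : 1 - q i ≠ 0 := sub_ne_zero.2 (hq i).symm
  have hrad := idealOfVars_le_radical_jacobianIdeal hnd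
  have hess_mem : mkQ W (hess W) ∈ gradedPiece W q (topDegree q) :=
    ⟨_, topDegree_eq_sum q ▸ isWeightedHomogeneous_jacobianDet pderiv_homogeneous, rfl⟩
  refine ⟨⟨?_, hess_mem⟩, le_antisymm ?_ ?_, fun d hd => ?_⟩
  · rw [Ne, mkQ_eq_zero_iff]
    exact jacobianDet_notMem_span_range pderiv_homogeneous degree_ne_zero hrad
  · rintro _ ⟨p, hp, rfl⟩
    obtain ⟨c, hc⟩ := exists_sub_C_mul_jacobianDet_mem_of_isWeightedHomogeneous
      pderiv_homogeneous hqh.1 degree_ne_zero hrad (topDegree_eq_sum q ▸ hp)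
    exact Submodule.mem_span_singleton.2 ⟨c, smul_mkQ_eq_iff.2 hc⟩
  · rwa [Submodule.span_singleton_le_iff_mem]
  · rw [eq_bot_iff]
    rintro _ ⟨p, hp, rfl⟩
    exact mkQ_eq_zero_iff.2 (mem_span_range_of_lt_degree pderiv_homogeneous hqh.1 degree_ne_zero
      hrad hp (topDegree_eq_sum q ▸ hd))

/-- (1) the class of `Hess W` in `Q_W` is nonzero and homogeneous
of weighted degree `∑ᵢ (1 - 2qᵢ)`; (2) the component of that degree is spanned
by `[Hess W]`; (3) all components of strictly larger degree vanish. -/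
theorem hessian_spans_top_degree {n : ℕ}
    (W : MvPolynomial (Fin n) ℂ) (q : Fin n → ℚ)
    (hq : ∀ i, 0 < q i ∧ q i < 1)
    (hnd : Nondegenerate W) (hqh : IsQuasiHomogeneous W q) :
    (mkQ W (hess W) ≠ 0 ∧ mkQ W (hess W) ∈ gradedPiece W q (topDegree q)) ∧
    gradedPiece W q (topDegree q) = Submodule.span ℂ {mkQ W (hess W)} ∧
    (∀ d : ℚ, topDegree q < d → gradedPiece W q d = ⊥) :=
  hessian_spans_top_degree_general W q (fun i => (hq i).2.ne) hnd hqh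
end
end

section
/- Let W ∈ ℂ[x₁,…,xₙ] be nondegenerate and quasihomogeneous with weights (q₁,…,qₙ), 0 < qᵢ < 1, and let μ = dim_ℂ Q_W. Define ⟨a,b⟩ ∈ ℂ for a,b ∈ Q_W by requiring that the homogeneous component of a·b of weighted degree Σᵢ(1 − 2qᵢ) equals (⟨a,b⟩/μ)·[Hess(W)]. Then ⟨·,·⟩ is a well-defined symmetric ℂ-bilinear form on Q_W, it is nondegenerate (for every nonzero a ∈ Q_W there exists b ∈ Q_W with ⟨a,b⟩ ≠ 0), and it satisfies the Frobenius property ⟨a·b, c⟩ = ⟨a, b·c⟩ for all a,b,c ∈ Q_W. -/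
open MvPolynomial
open scoped TensorProduct

noncomputable section

open LG

/-!
Write `f = (∂₁W, …, ∂ₙW)`. By the Nullstellensatz there are a matrix `A` and an `N` with
`A f = (x₁ ^ (N + 1), …, xₙ ^ (N + 1))`, and the Grothendieck residue
`L p = [x₁ ^ N ⋯ xₙ ^ N] (p * det A)` descends to `Q_W`. Over `Q_W`, where `f` vanishes at the class
`y` of `x`, factor `f = Δ (x - y)`. Then `A Δ (x - y) = (x₁ ^ (N + 1), …, xₙ ^ (N + 1))`; this
equation determines `det (A Δ)` modulo the powers on the right, and comparison with the diagonal
matrix of geometric sums gives `[x₁ ^ N ⋯ xₙ ^ N] (p * det (A Δ)) = p(y)`. Expanding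
`det Δ = ∑ uₘ x ^ m` turns this into the reproducing formula `a = ∑ L(a x ^ m) uₘ` on `Q_W`, so the
kernel of `L` contains no nonzero ideal. The trace of this expression of the identity map is
`L (∑ x ^ m uₘ)`, and `∑ x ^ m uₘ = (det Δ)(y)` is the class of `Hess W`; hence `L [Hess W] = μ`.

Choosing `A` homogeneous, `L` is concentrated in the degree `∑ (1 - 2 qᵢ)`. Since the weights are
positive, its kernel is exactly the part of `Q_W` of lower degree, so applying `L` to the defining
condition of the pairing shows that `⟨a, b⟩ = L (a * b)` is its only solution.
-/

namespace LG

open Matrix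

section Determinants

variable {σ R : Type*} [CommRing R] [Fintype σ] [DecidableEq σ]

lemma det_mul_mem_of_mulVec_mem (J : Ideal R) (M : Matrix σ σ R) (z : σ → R)
    (h : ∀ l, (M *ᵥ z) l ∈ J) (i : σ) : M.det * z i ∈ J := by
  have cramer : (M.adjugate *ᵥ (M *ᵥ z)) i = M.det * z i := by
    rw [mulVec_mulVec, adjugate_mul, smul_mulVec, one_mulVec, Pi.smul_apply, smul_eq_mul]
  rw [← cramer]
  exact J.sum_mem fun l _ => J.mul_mem_left _ (h l)

lemma det_sub_det_mem_of_forall_row_sub (J : Ideal R) (M M' : Matrix σ σ R)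
    (h : ∀ (E : Matrix σ σ R) (i : σ), E i = M i - M' i →
      (∀ l, l ≠ i → E l = M l ∨ E l = M' l) → E.det ∈ J) :
    M.det - M'.det ∈ J := by
  suffices key : ∀ (s : Finset σ) (E : Matrix σ σ R), (∀ l ∈ s, E l = M l) →
      (∀ l ∉ s, E l = M' l) → E.det - M'.det ∈ J from
    key Finset.univ M (fun _ _ => rfl) (fun l hl => absurd (Finset.mem_univ l) hl)
  intro s
  induction s using Finset.induction_on with
  | empty =>
    intro E _ hE
    rw [show E = M' from funext fun l => hE l (Finset.notMem_empty l), sub_self]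
    exact J.zero_mem
  | insert i s his ih =>
    intro E hEM hEM'
    have split_row : E.det =
        (E.updateRow i (M' i)).det + (E.updateRow i (M i - M' i)).det := by
      rw [← det_updateRow_add, add_sub_cancel, ← hEM i (Finset.mem_insert_self i s),
        updateRow_eq_self]
    rw [split_row, add_sub_right_comm]
    refine J.add_mem (ih _ (fun l hl => ?_) (fun l hl => ?_)) (h _ i updateRow_self fun l hl => ?_)
    · rw [updateRow_ne (ne_of_mem_of_not_mem hl his), hEM l (Finset.mem_insert_of_mem hl)]
    · obtain rfl | hli := eq_or_ne l i
      · exact updateRow_self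
      · rw [updateRow_ne hli, hEM' l (by simp [hli, hl])]
    · rw [updateRow_ne hl]
      by_cases hls : l ∈ insert i s
      · exact Or.inl (hEM l hls)
      · exact Or.inr (hEM' l hls)

end Determinants

section DifferenceQuotient

variable {σ S : Type*} [CommRing S]

lemma sub_C_eval_mem_span (y : σ → S) (p : MvPolynomial σ S) :
    p - C (eval y p) ∈ Ideal.span (Set.range fun j => X j - C (y j)) := by
  set I := Ideal.span (Set.range fun j => X j - C (y j))
  have mk_eq : Ideal.Quotient.mk I = (Ideal.Quotient.mk I).comp (C.comp (eval y)) := by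
    refine ringHom_ext (fun r => by simp) fun j => ?_
    rw [RingHom.comp_apply, RingHom.comp_apply, eval_X]
    exact Ideal.Quotient.eq.2 (Ideal.subset_span ⟨j, rfl⟩)
  exact Ideal.Quotient.eq.1 (congrArg (· p) mk_eq)

variable [Fintype σ]

lemma eval_coeff_of_sum_mul_eq {y : σ → S} {p : MvPolynomial σ S} {d : σ → MvPolynomial σ S}
    (h : ∑ j, d j * (X j - C (y j)) = p) (i : σ) :
    eval y (d i) = eval y (pderiv i p) := by
  classical
  simp [← h, pderiv_X, Pi.single_apply, apply_ite (eval y)]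

lemma exists_differenceQuotient_matrix {R : Type*} [CommRing R] [Algebra R S]
    {f : σ → MvPolynomial σ R} {y : σ → S} (hy : ∀ i, aeval y (f i) = 0) :
    ∃ Δ : Matrix σ σ (MvPolynomial σ S),
      Δ *ᵥ (fun j => X j - C (y j)) = fun i => map (algebraMap R S) (f i) := by
  have mem : ∀ i, map (algebraMap R S) (f i) ∈
      Ideal.span (Set.range fun j => X j - C (y j)) := fun i => by
    have := sub_C_eval_mem_span y (map (algebraMap R S) (f i))
    rwa [eval_map, ← aeval_def, hy i, map_zero, sub_zero] at this
  choose Δ hΔ using fun i => Ideal.mem_span_range_iff_exists_fun.1 (mem i)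
  exact ⟨of Δ, funext hΔ⟩

end DifferenceQuotient

section VarPowIdeal

variable {σ R : Type*} [CommRing R]

/-- The ideal `(Xₗ ^ (N + 1) : l ∈ s)`. The exponent is `N + 1` so that the monomials outside the
ideal are those with exponents at most `N` on `s`. -/
def varPowIdeal (R : Type*) [CommRing R] (s : Set σ) (N : ℕ) : Ideal (MvPolynomial σ R) :=
  Ideal.span ((fun l => X l ^ (N + 1)) '' s)

lemma X_pow_mem_varPowIdeal {s : Set σ} {l : σ} (hl : l ∈ s) (N : ℕ) :
    (X l : MvPolynomial σ R) ^ (N + 1) ∈ varPowIdeal R s N :=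
  Ideal.subset_span ⟨l, hl, rfl⟩

lemma mem_varPowIdeal_iff {s : Set σ} {N : ℕ} {p : MvPolynomial σ R} :
    p ∈ varPowIdeal R s N ↔ ∀ m : σ →₀ ℕ, (∀ l ∈ s, m l ≤ N) → coeff m p = 0 := by
  have monomial_gens : varPowIdeal R s N = Ideal.span
      ((fun e => monomial e 1) '' ((fun l => Finsupp.single l (N + 1)) '' s)) := by
    simp only [varPowIdeal, Set.image_image, X_pow_eq_monomial]
  simp only [monomial_gens, mem_ideal_span_monomial_image, Set.exists_mem_image,
    Finsupp.single_le_iff, mem_support_iff, Nat.succ_le_iff, ← not_le]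
  refine forall_congr' fun m => ?_
  rw [not_imp_comm]
  push Not
  rfl

-- A coefficient of `p` outside the ideal with maximal exponent of `X i` would survive in `p * X i`.
lemma mem_varPowIdeal_of_mul_X_sub_C_mem {s : Set σ} {N : ℕ} {i : σ} (hi : i ∉ s) (r : R)
    {p : MvPolynomial σ R} (h : p * (X i - C r) ∈ varPowIdeal R s N) :
    p ∈ varPowIdeal R s N := by
  classical
  rw [mem_varPowIdeal_iff] at h ⊢
  have coeff_step : ∀ m : σ →₀ ℕ, (∀ l ∈ s, m l ≤ N) →
      (∀ l ∈ s, (m + Finsupp.single i 1 : σ →₀ ℕ) l ≤ N) ∧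
      coeff m p = r * coeff (m + Finsupp.single i 1) p := by
    intro m hm
    have hm' : ∀ l ∈ s, (m + Finsupp.single i 1 : σ →₀ ℕ) l ≤ N := fun l hl => by
      simpa [Finsupp.single_apply, (ne_of_mem_of_not_mem hl hi).symm] using hm l hl
    have := h _ hm'
    rw [mul_sub, coeff_sub, coeff_mul_X, mul_comm p (C r), coeff_C_mul, sub_eq_zero] at this
    exact ⟨hm', this⟩
  by_contra! hne
  obtain ⟨m₀, hm₀, hm₀p⟩ := hne
  obtain ⟨m, hm, hmax⟩ := Finset.exists_max_image {m ∈ p.support | ∀ l ∈ s, m l ≤ N}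
    (fun m => m i) ⟨m₀, by simpa [hm₀p] using hm₀⟩
  rw [Finset.mem_filter, mem_support_iff] at hm
  obtain ⟨hm', hcoeff⟩ := coeff_step m hm.2
  have hzero : coeff (m + Finsupp.single i 1) p = 0 := by
    by_contra hne
    simpa using hmax _ (Finset.mem_filter.2 ⟨mem_support_iff.2 hne, hm'⟩)
  exact hm.1 (by rw [hcoeff, hzero, mul_zero])

variable [Fintype σ]

/-- The exponent `(N, …, N)` of the monomial generating the socle of
`R[x] ⧸ varPowIdeal R Set.univ N`; its coefficient is the residue for `(Xₗ ^ (N + 1))ₗ`. -/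
def socleExponent (σ : Type*) [Fintype σ] (N : ℕ) : σ →₀ ℕ :=
  Finsupp.equivFunOnFinite.symm fun _ => N

lemma coeff_socleExponent_eq_zero {N : ℕ} {p : MvPolynomial σ R}
    (hp : p ∈ varPowIdeal R Set.univ N) : coeff (socleExponent σ N) p = 0 :=
  mem_varPowIdeal_iff.1 hp _ fun _ _ => le_rfl

lemma coeff_socleExponent_prod_geomSum (N : ℕ) (y : σ → R) :
    coeff (socleExponent σ N)
      (∏ i, ∑ k ∈ Finset.range (N + 1), (X i : MvPolynomial σ R) ^ k * C (y i) ^ (N - k)) = 1 := by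
  classical
  have expand : ∀ e : σ → ℕ, ∏ i, ((X i : MvPolynomial σ R) ^ e i * C (y i) ^ (N - e i)) =
      monomial (Finsupp.equivFunOnFinite.symm e) (∏ i, y i ^ (N - e i)) := by
    intro e
    rw [monomial_eq, Finsupp.prod_fintype _ _ (by simp), Finset.prod_mul_distrib, mul_comm]
    simp [map_prod]
  simp only [Finset.prod_univ_sum, expand, coeff_sum, coeff_monomial]
  rw [Finset.sum_eq_single (fun _ => N)]
  · simp [socleExponent]
  · exact fun e _ he => if_neg fun h => he (Finsupp.equivFunOnFinite.symm.injective h)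
  · simp

variable [DecidableEq σ]

-- Passing from `M` to `M'` row by row, the change in row `i` is the determinant of a matrix `E`
-- with `E (X - y) = 0` modulo the powers of the other variables. Cramer's rule then gives
-- `det E * (X i - y i) = 0`, and `X i - y i` can be cancelled.
lemma det_sub_det_mem_varPowIdeal {N : ℕ} {y : σ → R} {M M' : Matrix σ σ (MvPolynomial σ R)}
    (hM : M *ᵥ (fun j => X j - C (y j)) = fun i => X i ^ (N + 1))
    (hM' : M' *ᵥ (fun j => X j - C (y j)) = fun i => X i ^ (N + 1)) :
    M.det - M'.det ∈ varPowIdeal R Set.univ N := by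
  refine det_sub_det_mem_of_forall_row_sub _ M M' fun E i hEi hEl => ?_
  have row_mem : ∀ l, E l ⬝ᵥ (fun j => X j - C (y j)) ∈ varPowIdeal R {i}ᶜ N := by
    intro l
    obtain rfl | hl := eq_or_ne l i
    · have row_zero : E l ⬝ᵥ (fun j => X j - C (y j)) = 0 := by
        rw [hEi, sub_dotProduct]
        exact sub_eq_zero.2 (congrFun (hM.trans hM'.symm) l)
      exact row_zero ▸ zero_mem _
    · have row_pow : E l ⬝ᵥ (fun j => X j - C (y j)) = X l ^ (N + 1) := by
        rcases hEl l hl with h | h <;> rw [h]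
        exacts [congrFun hM l, congrFun hM' l]
      exact row_pow ▸ X_pow_mem_varPowIdeal hl N
  have hE : E.det ∈ varPowIdeal R {i}ᶜ N :=
    mem_varPowIdeal_of_mul_X_sub_C_mem (by simp) (y i) (det_mul_mem_of_mulVec_mem _ E _ row_mem i)
  exact Ideal.span_mono (Set.image_mono (Set.subset_univ _)) hE

lemma coeff_socleExponent_det_eq_one {N : ℕ} {y : σ → R} {M : Matrix σ σ (MvPolynomial σ R)}
    (hM : M *ᵥ (fun j => X j - C (y j)) = fun i => X i ^ (N + 1)) :
    coeff (socleExponent σ N) M.det = 1 := by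
  have y_pow : ∀ i, y i ^ (N + 1) = 0 := fun i => by
    simpa [mulVec, dotProduct] using (congrArg (eval y) (congrFun hM i)).symm
  let G : Matrix σ σ (MvPolynomial σ R) :=
    diagonal fun i => ∑ k ∈ Finset.range (N + 1), X i ^ k * C (y i) ^ (N - k)
  have hG : G *ᵥ (fun j => X j - C (y j)) = fun i => X i ^ (N + 1) := by
    ext1 i
    have := (Commute.all (X i : MvPolynomial σ R) (C (y i))).geom_sum₂_mul (N + 1)
    simpa only [G, mulVec_diagonal, Nat.add_sub_cancel, ← map_pow, y_pow, map_zero, sub_zero]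
      using this
  have := coeff_socleExponent_eq_zero (det_sub_det_mem_varPowIdeal hM hG)
  rwa [coeff_sub, sub_eq_zero, det_diagonal, coeff_socleExponent_prod_geomSum] at this

lemma coeff_socleExponent_mul_det_eq_eval {N : ℕ} {y : σ → R}
    {M : Matrix σ σ (MvPolynomial σ R)}
    (hM : M *ᵥ (fun j => X j - C (y j)) = fun i => X i ^ (N + 1)) (p : MvPolynomial σ R) :
    coeff (socleExponent σ N) (p * M.det) = eval y p := by
  have det_mul_mem : ∀ j, M.det * (X j - C (y j)) ∈ varPowIdeal R Set.univ N :=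
    det_mul_mem_of_mulVec_mem _ M _ fun l => hM ▸ X_pow_mem_varPowIdeal (Set.mem_univ l) N
  have sub_mul_mem : (p - C (eval y p)) * M.det ∈ varPowIdeal R Set.univ N := by
    obtain ⟨c, hc⟩ := Ideal.mem_span_range_iff_exists_fun.1 (sub_C_eval_mem_span y p)
    rw [← hc, Finset.sum_mul]
    refine Ideal.sum_mem _ fun j _ => ?_
    rw [mul_assoc, mul_comm (X j - C (y j))]
    exact Ideal.mul_mem_left _ _ (det_mul_mem j)
  have := coeff_socleExponent_eq_zero sub_mul_mem
  rwa [sub_mul, coeff_sub, coeff_C_mul, coeff_socleExponent_det_eq_one hM, mul_one,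
    sub_eq_zero] at this

end VarPowIdeal

section WeightedHomogeneous

variable {σ R M : Type*}

lemma weightedHomogeneousComponent_mul_of_right [CommSemiring R] [AddCancelCommMonoid M]
    {w : σ → M} (d : M) (p : MvPolynomial σ R) {f : MvPolynomial σ R} {e : M}
    (hf : IsWeightedHomogeneous w f e) :
    weightedHomogeneousComponent w (d + e) (p * f) = weightedHomogeneousComponent w d p * f := by
  classical
  let := weightedGradedAlgebra R w
  simp only [← weightedDecomposition.decompose'_apply]
  exact DirectSum.coe_decompose_mul_add_of_right_mem (weightedHomogeneousSubmodule R w) hf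

lemma weight_pos [AddCommMonoid M] [PartialOrder M] [IsOrderedCancelAddMonoid M] {w : σ → M}
    (hw : ∀ i, 0 < w i) {m : σ →₀ ℕ} (hm : m ≠ 0) : 0 < Finsupp.weight w m := by
  rw [Finsupp.weight_apply]
  exact Finset.sum_pos (fun i hi => nsmul_pos (hw i) (Finsupp.mem_support_iff.1 hi))
    (Finsupp.support_nonempty_iff.2 hm)

variable [CommRing R] [AddCommGroup M] {w : σ → M}

lemma exists_isWeightedHomogeneous_sum_mul_eq {ι : Type*} [Fintype ι]
    {f : ι → MvPolynomial σ R} {e : ι → M} (hf : ∀ j, IsWeightedHomogeneous w (f j) (e j))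
    {g : MvPolynomial σ R} {d : M} (hg : IsWeightedHomogeneous w g d)
    (hmem : g ∈ Ideal.span (Set.range f)) :
    ∃ c : ι → MvPolynomial σ R,
      (∀ j, IsWeightedHomogeneous w (c j) (d - e j)) ∧ ∑ j, c j * f j = g := by
  obtain ⟨c, hc⟩ := Ideal.mem_span_range_iff_exists_fun.1 hmem
  refine ⟨fun j => weightedHomogeneousComponent w (d - e j) (c j),
    fun j => weightedHomogeneousComponent_isWeightedHomogeneous _ _, ?_⟩
  calc ∑ j, weightedHomogeneousComponent w (d - e j) (c j) * f j
      = ∑ j, weightedHomogeneousComponent w d (c j * f j) := by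
        refine Finset.sum_congr rfl fun j _ => ?_
        rw [← weightedHomogeneousComponent_mul_of_right _ _ (hf j), sub_add_cancel]
    _ = g := by rw [← map_sum, hc, hg.weightedHomogeneousComponent_same]

lemma isWeightedHomogeneous_det {ι : Type*} [Fintype ι] [DecidableEq ι]
    {A : Matrix ι ι (MvPolynomial σ R)} {r c : ι → M}
    (hA : ∀ i j, IsWeightedHomogeneous w (A i j) (r i - c j)) :
    IsWeightedHomogeneous w A.det (∑ i, (r i - c i)) := by
  rw [det_apply]
  refine IsWeightedHomogeneous.sum _ _ _ fun τ _ => ?_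
  have degree_eq : ∑ i, (r (τ i) - c i) = ∑ i, (r i - c i) := by
    rw [Finset.sum_sub_distrib, Finset.sum_sub_distrib, Equiv.sum_comp τ r]
  have prod_hom : IsWeightedHomogeneous w (∏ i, A (τ i) i) (∑ i, (r i - c i)) :=
    degree_eq ▸ IsWeightedHomogeneous.prod Finset.univ _ _ fun i _ => hA (τ i) i
  rcases Int.units_eq_one_or (Equiv.Perm.sign τ) with h | h
  · rwa [h, one_smul]
  · rw [h, Units.neg_smul, one_smul]
    exact prod_hom.neg

end WeightedHomogeneous

section ZeroLocus

variable {σ : Type*} [Finite σ]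

lemma exists_forall_X_pow_mem {k : Type*} [Field k] [IsAlgClosed k]
    {I : Ideal (MvPolynomial σ k)}
    (hI : ∀ x : σ → k, (∀ p ∈ I, eval x p = 0) → x = 0) :
    ∃ N : ℕ, ∀ i, (X i : MvPolynomial σ k) ^ (N + 1) ∈ I := by
  have X_mem_radical : ∀ i, (X i : MvPolynomial σ k) ∈ I.radical := fun i => by
    rw [← vanishingIdeal_zeroLocus_eq_radical (K := k), mem_vanishingIdeal_iff]
    intro x hx
    rw [hI x fun p hp => by simpa only [aeval_eq_eval] using hx p hp, aeval_X, Pi.zero_apply]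
  choose e he using X_mem_radical
  obtain ⟨N, hN⟩ := (Set.finite_range e).bddAbove
  exact ⟨N, fun i => Ideal.pow_mem_of_pow_mem _ (he i) ((hN ⟨i, rfl⟩).trans N.le_succ)⟩

lemma finite_quotient_of_X_pow_mem {R : Type*} [CommRing R] {I : Ideal (MvPolynomial σ R)} {N : ℕ}
    (hI : ∀ i, (X i : MvPolynomial σ R) ^ (N + 1) ∈ I) :
    Module.Finite R (MvPolynomial σ R ⧸ I) := by
  have X_integral : ∀ i, IsIntegral R (Ideal.Quotient.mk I (X i)) := fun i => by
    refine IsIntegral.of_pow N.succ_pos ?_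
    rw [← map_pow, Ideal.Quotient.eq_zero_iff_mem.2 (hI i)]
    exact isIntegral_zero
  have integral : Algebra.IsIntegral R (MvPolynomial σ R ⧸ I) := ⟨fun a => by
    obtain ⟨p, rfl⟩ := Ideal.Quotient.mk_surjective a
    induction p using MvPolynomial.induction_on with
    | C r => exact isIntegral_algebraMap
    | add p p' hp hp' => exact map_add (Ideal.Quotient.mk I) p p' ▸ hp.add hp'
    | mul_X p i hp => exact map_mul (Ideal.Quotient.mk I) p (X i) ▸ hp.mul (X_integral i)⟩
  exact Algebra.IsIntegral.finite

end ZeroLocus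

section Trace

lemma apply_sum_mul_eq_finrank {R Q ι : Type*} [CommRing R] [CommRing Q] [Algebra R Q]
    [Module.Free R Q] [Module.Finite R Q] {L : Q →ₗ[R] R} {s : Finset ι} {e u : ι → Q}
    (h : ∀ a, a = ∑ m ∈ s, L (a * e m) • u m) :
    L (∑ m ∈ s, e m * u m) = Module.finrank R Q := by
  have id_eq : (LinearMap.id : Q →ₗ[R] Q) =
      ∑ m ∈ s, (L ∘ₗ LinearMap.mulRight R (e m)).smulRight (u m) := by
    ext1 a
    simpa using h a
  calc L (∑ m ∈ s, e m * u m)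
      = ∑ m ∈ s, L (u m * e m) := by simp only [map_sum, mul_comm]
    _ = LinearMap.trace R Q LinearMap.id := by
        simp only [id_eq, map_sum, LinearMap.trace_smulRight, LinearMap.comp_apply,
          LinearMap.mulRight_apply]
    _ = Module.finrank R Q := LinearMap.trace_id R Q

end Trace

section Residue

variable {σ R : Type*} [CommRing R] [Fintype σ] [DecidableEq σ]

/-- The Grothendieck residue `p ↦ Res (p dx₁ ⋯ dxₙ / (f₁, …, fₙ))`, computed by the
transformation law: if `A *ᵥ f = (X₁ ^ (N + 1), …, Xₙ ^ (N + 1))`, it is the coefficient of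
`X₁ ^ N ⋯ Xₙ ^ N` in `p * det A`. The sequence `f` enters only through `A` and `N`. -/
def residue (A : Matrix σ σ (MvPolynomial σ R)) (N : ℕ) : MvPolynomial σ R →ₗ[R] R :=
  lcoeff R (socleExponent σ N) ∘ₗ LinearMap.mulRight R A.det

lemma residue_apply (A : Matrix σ σ (MvPolynomial σ R)) (N : ℕ) (p : MvPolynomial σ R) :
    residue A N p = coeff (socleExponent σ N) (p * A.det) :=
  rfl

lemma residue_eq_zero_of_isWeightedHomogeneous {M : Type*} [AddCommGroup M] {w : σ → M}
    {A : Matrix σ σ (MvPolynomial σ R)} {N : ℕ} {e : σ → M}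
    (hA : ∀ i j, IsWeightedHomogeneous w (A i j) ((N + 1) • w i - e j))
    {p : MvPolynomial σ R} {d : M} (hp : IsWeightedHomogeneous w p d)
    (hd : d ≠ ∑ i, (e i - w i)) : residue A N p = 0 := by
  rw [residue_apply]
  refine (hp.mul (isWeightedHomogeneous_det hA)).coeff_eq_zero _ fun hdeg => hd ?_
  have weight_socle : Finsupp.weight w (socleExponent σ N) = ∑ i, N • w i := by
    rw [Finsupp.weight_apply, Finsupp.sum_fintype _ _ (by simp)]
    rfl
  rw [weight_socle, ← sub_eq_iff_eq_add, ← Finset.sum_sub_distrib] at hdeg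
  rw [← hdeg]
  exact Finset.sum_congr rfl fun i _ => by rw [succ_nsmul]; abel

variable {N : ℕ} {f : σ → MvPolynomial σ R} {A : Matrix σ σ (MvPolynomial σ R)}

lemma span_range_le_ker_residue (hA : A *ᵥ f = fun i => X i ^ (N + 1)) :
    (Ideal.span (Set.range f)).restrictScalars R ≤ LinearMap.ker (residue A N) := by
  have det_mul_mem : ∀ j, A.det * f j ∈ varPowIdeal R Set.univ N :=
    det_mul_mem_of_mulVec_mem _ A f fun l => hA ▸ X_pow_mem_varPowIdeal (Set.mem_univ l) N
  intro p hp
  obtain ⟨c, rfl⟩ := Ideal.mem_span_range_iff_exists_fun.1 hp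
  rw [LinearMap.mem_ker, residue_apply, Finset.sum_mul]
  refine coeff_socleExponent_eq_zero (Ideal.sum_mem _ fun j _ => ?_)
  rw [mul_assoc, mul_comm (f j)]
  exact Ideal.mul_mem_left _ _ (det_mul_mem j)

variable {S : Type*} [CommRing S] [Algebra R S] {y : σ → S} {Δ : Matrix σ σ (MvPolynomial σ S)}

lemma aeval_det_jacobian
    (hΔ : Δ *ᵥ (fun j => X j - C (y j)) = fun i => map (algebraMap R S) (f i)) :
    aeval y (det (of fun i j => pderiv j (f i))) = eval y Δ.det := by
  rw [AlgHom.map_det, RingHom.map_det]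
  congr 1
  ext i j
  have := eval_coeff_of_sum_mul_eq (congrFun hΔ i) j
  simpa only [AlgHom.mapMatrix_apply, RingHom.mapMatrix_apply, Matrix.map_apply, of_apply,
    pderiv_map, eval_map, aeval_def] using this.symm

lemma mapMatrix_mul_mulVec_eq (hA : A *ᵥ f = fun i => X i ^ (N + 1))
    (hΔ : Δ *ᵥ (fun j => X j - C (y j)) = fun i => map (algebraMap R S) (f i)) :
    ((map (algebraMap R S)).mapMatrix A * Δ) *ᵥ (fun j => X j - C (y j)) =
      fun i => X i ^ (N + 1) := by
  rw [← mulVec_mulVec, hΔ]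
  ext1 i
  have := congrArg (map (algebraMap R S)) (congrFun hA i)
  simpa only [mulVec, dotProduct, map_sum, map_mul, map_pow, map_X, RingHom.mapMatrix_apply,
    Matrix.map_apply] using this

-- Expand `det Δ` in `coeff (p * det A * det Δ) = p(y)`, an instance of
-- `coeff_socleExponent_mul_det_eq_eval`.
lemma aeval_eq_sum_residue_smul (hA : A *ᵥ f = fun i => X i ^ (N + 1))
    (hΔ : Δ *ᵥ (fun j => X j - C (y j)) = fun i => map (algebraMap R S) (f i))
    (p : MvPolynomial σ R) :
    aeval y p = ∑ m ∈ Δ.det.support, residue A N (p * monomial m 1) • coeff m Δ.det := by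
  let ι := map (σ := σ) (algebraMap R S)
  have det_eq : ((ι.mapMatrix A) * Δ).det =
      ∑ m ∈ Δ.det.support, ι (A.det * monomial m 1) * C (coeff m Δ.det) := by
    rw [det_mul, ← RingHom.map_det]
    conv_lhs => rw [as_sum Δ.det, Finset.mul_sum]
    refine Finset.sum_congr rfl fun m _ => ?_
    rw [map_mul, map_monomial, map_one, mul_assoc, mul_comm (monomial m 1), C_mul_monomial, mul_one]
  have summand (m : σ →₀ ℕ) :
      coeff (socleExponent σ N) (ι p * (ι (A.det * monomial m 1) * C (coeff m Δ.det))) =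
        residue A N (p * monomial m 1) • coeff m Δ.det := by
    rw [← mul_assoc, ← map_mul, mul_comm _ (C _), coeff_C_mul, coeff_map, residue_apply,
      Algebra.smul_def, mul_comm, mul_assoc p, mul_comm A.det]
  calc aeval y p
      = eval y (ι p) := by rw [eval_map, aeval_def]
    _ = coeff (socleExponent σ N) (ι p * (ι.mapMatrix A * Δ).det) :=
        (coeff_socleExponent_mul_det_eq_eval (mapMatrix_mul_mulVec_eq hA hΔ) _).symm
    _ = ∑ m ∈ Δ.det.support, residue A N (p * monomial m 1) • coeff m Δ.det := by
        simp only [det_eq, Finset.mul_sum, coeff_sum, summand]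

lemma aeval_det_jacobian_eq_sum
    (hΔ : Δ *ᵥ (fun j => X j - C (y j)) = fun i => map (algebraMap R S) (f i)) :
    aeval y (det (of fun i j => pderiv j (f i))) =
      ∑ m ∈ Δ.det.support, aeval y (monomial m (1 : R)) * coeff m Δ.det := by
  rw [aeval_det_jacobian hΔ, eval_eq]
  refine Finset.sum_congr rfl fun m _ => ?_
  rw [aeval_monomial, map_one, one_mul, mul_comm]
  rfl

end Residue

section MilnorRing

variable {σ : Type*} {W : MvPolynomial σ ℂ}

lemma mkQ_eq_aeval (p : MvPolynomial σ ℂ) : mkQ W p = aeval (fun i => mkQ W (X i)) p :=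
  congrArg (· p) (aeval_unique (mkQ W))

lemma mkQ_surjective : Function.Surjective (mkQ W) :=
  Ideal.Quotient.mk_surjective

lemma mkQ_pderiv (i : σ) : mkQ W (pderiv i W) = 0 :=
  Ideal.Quotient.eq_zero_iff_mem.2 (Ideal.subset_span ⟨i, rfl⟩)

lemma Nondegenerate.exists_X_pow_mem_jacobianIdeal [Finite σ] (hnd : Nondegenerate W) :
    ∃ N : ℕ, ∀ i, X i ^ (N + 1) ∈ jacobianIdeal W :=
  exists_forall_X_pow_mem fun x hx => hnd x fun i => hx _ (Ideal.subset_span ⟨i, rfl⟩)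

lemma Nondegenerate.finite_milnorRing [Finite σ] (hnd : Nondegenerate W) :
    Module.Finite ℂ (MilnorRing W) :=
  let ⟨_, hN⟩ := hnd.exists_X_pow_mem_jacobianIdeal
  finite_quotient_of_X_pow_mem hN

variable [Fintype σ] {q : σ → ℚ}

lemma IsQuasiHomogeneous.isWeightedHomogeneous (hqh : IsQuasiHomogeneous W q) :
    IsWeightedHomogeneous q W 1 := by
  intro m hm
  rw [← hqh.2 m (mem_support_iff.2 hm), Finsupp.weight_apply, Finsupp.sum_fintype _ _ (by simp)]
  simp only [nsmul_eq_mul]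

lemma IsQuasiHomogeneous.pderiv (hqh : IsQuasiHomogeneous W q) (i : σ) :
    IsWeightedHomogeneous q (pderiv i W) (1 - q i) :=
  hqh.isWeightedHomogeneous.pderiv (sub_add_cancel 1 (q i))

lemma IsQuasiHomogeneous.nontrivial_milnorRing (hqh : IsQuasiHomogeneous W q)
    (hq : ∀ i, q i < 1) : Nontrivial (MilnorRing W) := by
  have le_ker : jacobianIdeal W ≤ RingHom.ker (constantCoeff (R := ℂ) (σ := σ)) := by
    rw [jacobianIdeal, Ideal.span_le]
    rintro _ ⟨i, rfl⟩
    refine (hqh.pderiv i).coeff_eq_zero 0 ?_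
    rw [map_zero]
    exact (sub_pos.2 (hq i)).ne
  exact Ideal.Quotient.nontrivial_iff.2 (ne_top_of_le_ne_top (RingHom.ker_ne_top _) le_ker)

lemma finrank_milnorRing_ne_zero (hnd : Nondegenerate W) (hqh : IsQuasiHomogeneous W q)
    (hq : ∀ i, q i < 1) : (Module.finrank ℂ (MilnorRing W) : ℂ) ≠ 0 := by
  have := hnd.finite_milnorRing
  have := hqh.nontrivial_milnorRing hq
  exact Nat.cast_ne_zero.2 Module.finrank_pos.ne'

lemma exists_isWeightedHomogeneous_mulVec_pderiv (hnd : Nondegenerate W)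
    (hqh : IsQuasiHomogeneous W q) :
    ∃ (N : ℕ) (A : Matrix σ σ (MvPolynomial σ ℂ)),
      (A *ᵥ fun j => pderiv j W) = (fun i => X i ^ (N + 1)) ∧
      ∀ i j, IsWeightedHomogeneous q (A i j) ((N + 1) • q i - (1 - q j)) := by
  obtain ⟨N, hN⟩ := hnd.exists_X_pow_mem_jacobianIdeal
  choose A hA hsum using fun i => exists_isWeightedHomogeneous_sum_mul_eq hqh.pderiv
    ((isWeightedHomogeneous_X ℂ q i).pow (N + 1)) (hN i)
  exact ⟨N, of A, funext hsum, hA⟩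

variable [DecidableEq σ]

/-- `L` is a residue functional on the Milnor ring of `W`: it vanishes outside the top weighted
degree, is normalised by `L [Hess W] = μ`, and its kernel contains no nonzero ideal. -/
structure IsResidue (W : MvPolynomial σ ℂ) (q : σ → ℚ) (L : MilnorRing W →ₗ[ℂ] ℂ) : Prop where
  map_hess : L (mkQ W (hess W)) = Module.finrank ℂ (MilnorRing W)
  map_eq_zero_of_ne_topDegree : ∀ {p : MvPolynomial σ ℂ} {d : ℚ},
    IsWeightedHomogeneous q p d → d ≠ topDegree q → L (mkQ W p) = 0
  eq_zero_of_forall_map_mul_eq_zero : ∀ a, (∀ b, L (a * b) = 0) → a = 0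

theorem exists_isResidue (hnd : Nondegenerate W) (hqh : IsQuasiHomogeneous W q) :
    ∃ L, IsResidue W q L := by
  obtain ⟨N, A, hA, hAq⟩ := exists_isWeightedHomogeneous_mulVec_pderiv hnd hqh
  obtain ⟨Δ, hΔ⟩ := exists_differenceQuotient_matrix (f := fun i => pderiv i W)
    (y := fun i => mkQ W (X i)) fun i => by rw [← mkQ_eq_aeval, mkQ_pderiv]
  let L : MilnorRing W →ₗ[ℂ] ℂ :=
    ((jacobianIdeal W).restrictScalars ℂ).liftQ (residue A N) (span_range_le_ker_residue hA)
  have reproducing (a : MilnorRing W) :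
      a = ∑ m ∈ Δ.det.support, L (a * mkQ W (monomial m 1)) • coeff m Δ.det := by
    obtain ⟨p, rfl⟩ := mkQ_surjective a
    simp only [← map_mul]
    exact (mkQ_eq_aeval p).trans (aeval_eq_sum_residue_smul hA hΔ p)
  have hess_eq : mkQ W (hess W) =
      ∑ m ∈ Δ.det.support, mkQ W (monomial m 1) * coeff m Δ.det := by
    rw [mkQ_eq_aeval, hess, ← det_transpose]
    refine (aeval_det_jacobian_eq_sum hΔ).trans (Finset.sum_congr rfl fun m _ => ?_)
    rw [← mkQ_eq_aeval]
  refine ⟨L, ?_, fun {p d} hp hd => ?_, fun a ha => ?_⟩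
  · have := hnd.finite_milnorRing
    rw [hess_eq, apply_sum_mul_eq_finrank reproducing]
  · refine residue_eq_zero_of_isWeightedHomogeneous hAq hp ?_
    convert hd using 1
    rw [topDegree]
    exact Finset.sum_congr rfl fun i _ => by ring
  · rw [reproducing a]
    exact Finset.sum_eq_zero fun m _ => by rw [ha, zero_smul]

namespace IsResidue

variable {L : MilnorRing W →ₗ[ℂ] ℂ}

lemma belowTop_le_ker (hL : IsResidue W q L) : belowTop W q ≤ LinearMap.ker L := by
  refine iSup₂_le fun d hd => ?_
  rintro _ ⟨p, hp, rfl⟩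
  exact hL.map_eq_zero_of_ne_topDegree hp hd.ne

-- Multiplying by a nonconstant monomial raises the degree above `topDegree q`, where `L` vanishes.
lemma mkQ_eq_zero_of_topDegree_le (hL : IsResidue W q L) (hq : ∀ i, 0 < q i)
    {p : MvPolynomial σ ℂ} {d : ℚ} (hp : IsWeightedHomogeneous q p d) (hd : topDegree q ≤ d)
    (hLp : L (mkQ W p) = 0) : mkQ W p = 0 := by
  refine hL.eq_zero_of_forall_map_mul_eq_zero _ fun b => ?_
  obtain ⟨r, rfl⟩ := mkQ_surjective b
  rw [← map_mul]
  induction r using MvPolynomial.induction_on' with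
  | add r r' hr hr' => rw [mul_add, map_add, map_add, hr, hr', add_zero]
  | monomial m c =>
    obtain rfl | hm := eq_or_ne m 0
    · rw [← C_apply, mul_comm, ← smul_eq_C_mul, map_smul, map_smul, hLp, smul_zero]
    · exact hL.map_eq_zero_of_ne_topDegree (hp.mul (isWeightedHomogeneous_monomial q m c rfl))
        (lt_add_of_le_of_pos hd (weight_pos hq hm)).ne'

lemma map_mkQ_weightedHomogeneousComponent_topDegree (hL : IsResidue W q L)
    (p : MvPolynomial σ ℂ) :
    L (mkQ W (weightedHomogeneousComponent q (topDegree q) p)) = L (mkQ W p) := by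
  have hfin := weightedHomogeneousComponent_finsupp (w := q) p
  conv_rhs => rw [← sum_weightedHomogeneousComponent q p, finsum_eq_sum _ hfin, map_sum, map_sum]
  symm
  refine Finset.sum_eq_single (topDegree q) (fun d _ hd => ?_) fun htop => ?_
  · exact hL.map_eq_zero_of_ne_topDegree
      (weightedHomogeneousComponent_isWeightedHomogeneous d p) hd
  · rw [hfin.mem_toFinset, Function.notMem_support] at htop
    rw [htop, map_zero, map_zero]

theorem ker_eq_belowTop (hL : IsResidue W q L) (hq : ∀ i, 0 < q i) :
    LinearMap.ker L = belowTop W q := by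
  refine le_antisymm (fun c hc => ?_) hL.belowTop_le_ker
  obtain ⟨p, rfl⟩ := mkQ_surjective c
  have hfin := weightedHomogeneousComponent_finsupp (w := q) p
  rw [← sum_weightedHomogeneousComponent q p, finsum_eq_sum _ hfin, map_sum]
  refine sum_mem fun d _ => ?_
  have hpd := weightedHomogeneousComponent_isWeightedHomogeneous (w := q) d p
  obtain hlt | hge := lt_or_ge d (topDegree q)
  · exact Submodule.mem_iSup_of_mem d (Submodule.mem_iSup_of_mem hlt ⟨_, hpd, rfl⟩)
  · have hLpd : L (mkQ W (weightedHomogeneousComponent q d p)) = 0 := by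
      obtain rfl | hne := eq_or_ne d (topDegree q)
      · rw [hL.map_mkQ_weightedHomogeneousComponent_topDegree, hc]
      · exact hL.map_eq_zero_of_ne_topDegree hpd hne
    rw [hL.mkQ_eq_zero_of_topDegree_le hq hpd hge hLpd]
    exact zero_mem _

theorem isMilnorPairing_iff (hL : IsResidue W q L) (hq : ∀ i, 0 < q i)
    (hμ : (Module.finrank ℂ (MilnorRing W) : ℂ) ≠ 0) {p : MilnorRing W → MilnorRing W → ℂ} :
    IsMilnorPairing W q p ↔ p = fun a b => L (a * b) := by
  simp only [IsMilnorPairing, ← hL.ker_eq_belowTop hq, LinearMap.mem_ker, map_sub, map_smul,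
    hL.map_hess, smul_eq_mul, div_mul_cancel₀ _ hμ, sub_eq_zero, funext_iff]
  exact forall₂_congr fun _ _ => eq_comm

end IsResidue

end MilnorRing

end LG

theorem milnor_pairing_frobenius_general {σ : Type*} [Fintype σ] [DecidableEq σ]
    (W : MvPolynomial σ ℂ) (q : σ → ℚ) (hq : ∀ i, q i < 1)
    (hnd : Nondegenerate W) (hqh : IsQuasiHomogeneous W q) :
    ∃ p : MilnorRing W → MilnorRing W → ℂ,
      IsMilnorPairing W q p ∧
      (∀ p', IsMilnorPairing W q p' → p' = p) ∧
      (∀ a b, p a b = p b a) ∧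
      (∀ a b c : MilnorRing W, ∀ s t : ℂ,
        p (s • a + t • b) c = s * p a c + t * p b c) ∧
      (∀ a : MilnorRing W, a ≠ 0 → ∃ b, p a b ≠ 0) ∧
      (∀ a b c : MilnorRing W, p (a * b) c = p a (b * c)) := by
  obtain ⟨L, hL⟩ := exists_isResidue hnd hqh
  have pairing_iff (p : MilnorRing W → MilnorRing W → ℂ) :
      IsMilnorPairing W q p ↔ p = fun a b => L (a * b) :=
    hL.isMilnorPairing_iff hqh.1 (finrank_milnorRing_ne_zero hnd hqh hq)
  refine ⟨fun a b => L (a * b), (pairing_iff _).2 rfl, fun p' => (pairing_iff p').1, ?symm,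
    ?bilinear, ?nondegenerate, ?frobenius⟩
  case symm => exact fun a b => congrArg L (mul_comm a b)
  case bilinear =>
    intro a b c s t
    simp only [add_mul, smul_mul_assoc, map_add, map_smul, smul_eq_mul]
  case nondegenerate =>
    intro a ha
    by_contra! hzero
    exact ha (hL.eq_zero_of_forall_map_mul_eq_zero a hzero)
  case frobenius => exact fun a b c => congrArg L (mul_assoc a b c)

/-- the pairing on the Milnor ring of a nondegenerate
quasihomogeneous polynomial is well defined (it exists and is unique),
symmetric, bilinear, nondegenerate, and satisfies the Frobenius property. -/
theorem milnor_pairing_frobenius {n : ℕ}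
    (W : MvPolynomial (Fin n) ℂ) (q : Fin n → ℚ)
    (hq : ∀ i, 0 < q i ∧ q i < 1)
    (hnd : Nondegenerate W) (hqh : IsQuasiHomogeneous W q) :
    ∃ p : MilnorRing W → MilnorRing W → ℂ,
      IsMilnorPairing W q p ∧
      (∀ p', IsMilnorPairing W q p' → p' = p) ∧
      (∀ a b, p a b = p b a) ∧
      (∀ a b c : MilnorRing W, ∀ s t : ℂ,
        p (s • a + t • b) c = s * p a c + t * p b c) ∧
      (∀ a : MilnorRing W, a ≠ 0 → ∃ b, p a b ≠ 0) ∧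
      (∀ a b c : MilnorRing W, p (a * b) c = p a (b * c)) := by
  exact milnor_pairing_frobenius_general W q (fun i => (hq i).2) hnd hqh
end
end

section
/- Let W ∈ ℂ[x₁,…,xₙ] be an admissible polynomial; in particular its quasihomogeneous weights are uniquely determined (equivalently, the exponent vectors of the monomials of W span ℚⁿ). Then the group G_W^max = {ζ ∈ (ℂ^×)ⁿ : W(ζ₁x₁,…,ζₙxₙ) = W(x₁,…,xₙ)} of diagonal symmetries of W is a finite group, and every coordinate ζᵢ of every element ζ ∈ G_W^max is a root of unity. -/
open MvPolynomial
open scoped TensorProduct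

noncomputable section

open LG

/-! A diagonal symmetry `ζ` of `W` fixes each monomial `x^a` of `W`, so the character `m ↦ ζ^m` of
`ℤ^σ` is trivial on the lattice spanned by the exponent vectors `a`. Perturbing the positive weights
`q` along a vector orthogonal to all exponent vectors yields weights again, so uniqueness of `q`
means that the exponent vectors span `ℚ^σ`. The lattice therefore contains a positive multiple
`kᵢ eᵢ` of each basis vector, whence `ζᵢ ^ kᵢ = 1` with `kᵢ` independent of `ζ`, and there are
finitely many such tuples. -/

namespace LG

section WeightUniqueness

variable {σ K : Type*} [Field K]

theorem span_eq_top_of_forall_dotProduct_eq_zero [Fintype σ] {A : Set (σ → K)}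
    (hA : ∀ v, (∀ a ∈ A, v ⬝ᵥ a = 0) → v = 0) : Submodule.span K A = ⊤ := by
  classical
  by_contra hne
  obtain ⟨f, hf, hle⟩ := Submodule.exists_le_ker_of_lt_top _ (lt_top_iff_ne_top.2 hne)
  obtain ⟨v, rfl⟩ := (dotProductEquiv K σ).surjective f
  have hv : v = 0 := hA v fun a ha => hle (Submodule.subset_span ha)
  exact hf (by rw [hv, map_zero])

variable [LinearOrder K] [IsStrictOrderedRing K]

theorem exists_pos_forall_pos_add_smul [Finite σ] {q : σ → K} (hq : ∀ i, 0 < q i) (v : σ → K) :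
    ∃ ε : K, 0 < ε ∧ ∀ i, 0 < (q + ε • v) i := by
  obtain ⟨M, hM⟩ := Finite.exists_le fun i => -v i / q i
  have hpos : 0 < |M| + 1 := by positivity
  refine ⟨(|M| + 1)⁻¹, inv_pos.2 hpos, fun i => ?_⟩
  have hlt : -v i < (|M| + 1) * q i :=
    (div_lt_iff₀ (hq i)).1 ((hM i).trans_lt ((le_abs_self M).trans_lt (lt_add_one _)))
  have hscale : (q + (|M| + 1)⁻¹ • v) i = (|M| + 1)⁻¹ * ((|M| + 1) * q i + v i) := by
    simp only [Pi.add_apply, Pi.smul_apply, smul_eq_mul]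
    field_simp
  rw [hscale]
  exact mul_pos (inv_pos.2 hpos) (by linarith)

theorem span_eq_top_of_unique_pos_solution [Fintype σ] {A : Set (σ → K)} {b : (σ → K) → K}
    {q : σ → K} (hpos : ∀ i, 0 < q i) (hq : ∀ a ∈ A, q ⬝ᵥ a = b a)
    (huniq : ∀ q' : σ → K, (∀ i, 0 < q' i) → (∀ a ∈ A, q' ⬝ᵥ a = b a) → q' = q) :
    Submodule.span K A = ⊤ := by
  refine span_eq_top_of_forall_dotProduct_eq_zero fun v hv => ?_
  obtain ⟨ε, hε, hpos'⟩ := exists_pos_forall_pos_add_smul hpos v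
  have hsol : ∀ a ∈ A, (q + ε • v) ⬝ᵥ a = b a := fun a ha => by
    rw [add_dotProduct, smul_dotProduct, hv a ha, smul_zero, add_zero, hq a ha]
  have hzero : ε • v = 0 := add_eq_left.1 (huniq _ hpos' hsol)
  exact (smul_eq_zero.1 hzero).resolve_left hε.ne'

end WeightUniqueness

section ExponentVectors

variable {σ : Type*}

/-- The rows of the exponent matrix of a set `S` of monomials, with entries taken in `R`: `ℤ` for
the lattice they generate, `ℚ` for the rank condition. -/
def exponentVectors (R : Type*) [NatCast R] (S : Set (σ →₀ ℕ)) : Set (σ → R) :=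
  (fun a i => (a i : R)) '' S

theorem IsQuasiHomogeneous.span_exponentVectors_eq_top [Fintype σ] {W : MvPolynomial σ ℂ}
    {q : σ → ℚ} (hq : IsQuasiHomogeneous W q) (huniq : ∀ q', IsQuasiHomogeneous W q' → q' = q) :
    Submodule.span ℚ (exponentVectors ℚ (W.support : Set (σ →₀ ℕ))) = ⊤ := by
  have isQuasiHomogeneous_iff (q' : σ → ℚ) : IsQuasiHomogeneous W q' ↔
      (∀ i, 0 < q' i) ∧ ∀ a ∈ exponentVectors ℚ (W.support : Set (σ →₀ ℕ)), q' ⬝ᵥ a = 1 := by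
    simp only [IsQuasiHomogeneous, exponentVectors, Set.forall_mem_image, Finset.mem_coe,
      dotProduct, mul_comm]
  simp only [isQuasiHomogeneous_iff, and_imp] at hq huniq
  exact span_eq_top_of_unique_pos_solution (b := fun _ => 1) hq.1 hq.2 huniq

theorem exists_pos_nsmul_mem_span_exponentVectors {S : Set (σ →₀ ℕ)}
    (hS : Submodule.span ℚ (exponentVectors ℚ S) = ⊤) (m : σ → ℤ) :
    ∃ k : ℕ, 0 < k ∧ k • m ∈ Submodule.span ℤ (exponentVectors ℤ S) := by
  let castVec : (σ → ℤ) →ₗ[ℤ] σ → ℚ := (Int.castAddHom ℚ).toIntLinearMap.compLeft σ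
  have castVec_injective : Function.Injective castVec := Int.cast_injective.comp_left
  have image_exponentVectors : castVec '' exponentVectors ℤ S = exponentVectors ℚ S := by
    simp only [exponentVectors, Set.image_image]
    rfl
  obtain ⟨⟨d, hd⟩, hmem⟩ := multiple_mem_span_of_mem_localization_span
    (nonZeroDivisors ℤ) ℚ (exponentVectors ℚ S) (castVec m) (hS ▸ Submodule.mem_top)
  have hdm : d • m ∈ Submodule.span ℤ (exponentVectors ℤ S) := by
    rw [← Submodule.comap_map_eq_of_injective castVec_injective (Submodule.span ℤ _),
      Submodule.mem_comap, Submodule.map_span, image_exponentVectors, map_smul]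
    exact hmem
  refine ⟨d.natAbs, Int.natAbs_pos.2 (nonZeroDivisors.ne_zero hd), ?_⟩
  rw [← natCast_zsmul, ← Int.sign_mul_self_eq_natAbs, mul_smul]
  exact Submodule.smul_mem _ _ hdm

theorem exists_mem_apply_ne_zero_of_span_eq_top {S : Set (σ →₀ ℕ)}
    (hS : Submodule.span ℚ (exponentVectors ℚ S) = ⊤) (i : σ) : ∃ a ∈ S, a i ≠ 0 := by
  by_contra! hzero
  have hle : Submodule.span ℚ (exponentVectors ℚ S) ≤
      LinearMap.ker (LinearMap.proj (R := ℚ) (φ := fun _ : σ => ℚ) i) := by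
    rw [Submodule.span_le]
    rintro _ ⟨a, ha, rfl⟩
    simp [hzero a ha]
  have hone : (1 : σ → ℚ) i = 0 := hle (hS ▸ Submodule.mem_top)
  exact one_ne_zero hone

variable [Fintype σ]

theorem prod_zpow_eq_one_of_mem_span {G : Type*} [CommGroup G] {A : Set (σ → ℤ)} {u : σ → G}
    (hu : ∀ m ∈ A, ∏ i, u i ^ m i = 1) {m : σ → ℤ} (hm : m ∈ Submodule.span ℤ A) :
    ∏ i, u i ^ m i = 1 := by
  induction hm using Submodule.span_induction with
  | mem m hm => exact hu m hm
  | zero => simp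
  | add m m' _ _ h h' => simp [zpow_add, Finset.prod_mul_distrib, h, h']
  | smul c m _ h => simp [mul_comm c, zpow_mul, Finset.prod_zpow, h]

theorem exists_pos_forall_pow_eq_one_of_span_eq_top (M : Type*) [CommMonoid M] {S : Set (σ →₀ ℕ)}
    (hS : Submodule.span ℚ (exponentVectors ℚ S) = ⊤) (i : σ) :
    ∃ k : ℕ, 0 < k ∧ ∀ ζ : σ → M, (∀ a ∈ S, ∏ j, ζ j ^ a j = 1) → ζ i ^ k = 1 := by
  classical
  obtain ⟨k, hk, hmem⟩ := exists_pos_nsmul_mem_span_exponentVectors hS (Pi.single i 1)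
  refine ⟨k, hk, fun ζ hζ => ?_⟩
  have isUnit_coord (j : σ) : IsUnit (ζ j) := by
    obtain ⟨a, ha, haj⟩ := exists_mem_apply_ne_zero_of_span_eq_top hS j
    refine isUnit_of_dvd_one ?_
    rw [← hζ a ha]
    exact (dvd_pow_self _ haj).trans (Finset.dvd_prod_of_mem _ (Finset.mem_univ j))
  choose u hu using isUnit_coord
  obtain rfl : (fun j => (u j : M)) = ζ := funext hu
  have hu_exponent : ∀ m ∈ exponentVectors ℤ S, ∏ j, u j ^ m j = 1 := by
    rintro _ ⟨a, ha, rfl⟩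
    exact Units.ext (by simpa using hζ a ha)
  have hprod := prod_zpow_eq_one_of_mem_span hu_exponent hmem
  have hpow : u i ^ k = 1 := by
    simpa [Pi.single_apply] using hprod
  exact congrArg Units.val hpow

end ExponentVectors

section Rescaling

variable {σ R : Type*}

theorem coeff_aeval_C_mul_X [Fintype σ] [CommSemiring R] (ζ : σ → R) (W : MvPolynomial σ R)
    (a : σ →₀ ℕ) :
    coeff a (aeval (fun i => C (ζ i) * X i) W) = (∏ i, ζ i ^ a i) * coeff a W := by
  classical
  induction W using MvPolynomial.induction_on' with
  | monomial b c =>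
    have aeval_monomial_eq : aeval (fun i => C (ζ i) * X i) (monomial b c) =
        monomial b ((∏ i, ζ i ^ b i) * c) := by
      rw [aeval_monomial, monomial_eq]
      simp only [algebraMap_eq, mul_pow, Finsupp.prod_mul,
        Finsupp.prod_fintype _ _ fun _ => pow_zero _, C_mul, map_prod, C_pow]
      ring
    rw [aeval_monomial_eq, coeff_monomial, coeff_monomial]
    split_ifs with hba
    · rw [hba]
    · rw [mul_zero]
  | add p r hp hr => rw [map_add, coeff_add, coeff_add, hp, hr, mul_add]

theorem prod_pow_eq_one_of_aeval_C_mul_X_eq [Fintype σ] [CommSemiring R] [IsCancelMulZero R]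
    {ζ : σ → R} {W : MvPolynomial σ R} (hζ : aeval (fun i => C (ζ i) * X i) W = W)
    {a : σ →₀ ℕ} (ha : a ∈ W.support) :
    ∏ i, ζ i ^ a i = 1 := by
  refine (mul_eq_right₀ (mem_support_iff.1 ha)).1 ?_
  rw [← coeff_aeval_C_mul_X, hζ]

theorem finite_setOf_forall_pow_eq_one [Finite σ] [CommRing R] [IsDomain R] {k : σ → ℕ}
    (hk : ∀ i, 0 < k i) :
    {ζ : σ → R | ∀ i, ζ i ^ k i = 1}.Finite := by
  have hroots (i : σ) : {z : R | z ^ k i = 1}.Finite :=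
    (Polynomial.nthRootsFinset (k i) (1 : R)).finite_toSet.subset
      fun _ hz => (Polynomial.mem_nthRootsFinset (hk i) _).2 hz
  exact Set.Finite.pi' hroots

end Rescaling

end LG

theorem maximal_symmetry_group_finite_general {σ R : Type*} [Finite σ] [CommRing R] [IsDomain R]
    (W : MvPolynomial σ R)
    (hW : Submodule.span ℚ (exponentVectors ℚ (W.support : Set (σ →₀ ℕ))) = ⊤) :
    {ζ : σ → R | aeval (fun i => C (ζ i) * X i) W = W}.Finite ∧
    ∀ ζ : σ → R, aeval (fun i => C (ζ i) * X i) W = W → ∀ i, ∃ k : ℕ, 0 < k ∧ ζ i ^ k = 1 := by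
  have := Fintype.ofFinite σ
  choose k hk hpow using exists_pos_forall_pow_eq_one_of_span_eq_top R hW
  have hroot (ζ : σ → R) (hζ : aeval (fun i => C (ζ i) * X i) W = W) (i : σ) : ζ i ^ k i = 1 :=
    hpow i ζ fun _ ha => prod_pow_eq_one_of_aeval_C_mul_X_eq hζ ha
  exact ⟨(finite_setOf_forall_pow_eq_one hk).subset hroot,
    fun ζ hζ i => ⟨k i, hk i, hroot ζ hζ i⟩⟩

/-- the group of diagonal symmetries of an admissible polynomial
is finite, and every coordinate of every diagonal symmetry is a root of unity. -/
theorem maximal_symmetry_group_finite {n : ℕ}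
    (W : MvPolynomial (Fin n) ℂ) (q : Fin n → ℚ)
    (hW : Admissible W q) :
    {ζ : Fin n → ℂ | (∀ i, ζ i ≠ 0) ∧ scaleVars ζ W = W}.Finite ∧
    ∀ ζ : Fin n → ℂ, (∀ i, ζ i ≠ 0) → scaleVars ζ W = W →
      ∀ i, ∃ k : ℕ, 0 < k ∧ ζ i ^ k = 1 := by
  obtain ⟨hfin, hroot⟩ := maximal_symmetry_group_finite_general W
    (hW.2.1.span_exponentVectors_eq_top hW.2.2.1)
  exact ⟨hfin.subset fun _ hζ => hζ.2, fun ζ _ => hroot ζ⟩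
end
end
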